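/- arXiv:1703.08094 — 2 statements merged into one kernel-verified Lean document; each statement's English description precedes it below -/
import Mathlib

section
/- Let M be a cocomplete category and (L,R) a weak factorization system on M which is cofibrantly generated by a set of morphisms X ⊆ L whose domains are ℵ₀-small relative to X. Then (L,R) is strictly ℵ₀-cofibrantly generated, i.e., the domains of the morphisms in X are strictly ℵ₀-small relative to X. -/
/-!
The point is that smallness with respect to well-ordered chains already forces smallness with
respect to arbitrary directed good diagrams. Let `D : P ⥤ M` be such a diagram with cellular links.

For a lower set `I` of `P` write `colimOn D I` for the colimit of `D` over `I`. For lower sets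
`I ⊆ J` containing `⊥`, the comparison morphism `colimOn D I ⟶ colimOn D J` is cellular
(`cellP_mapOn`): the elements of `J \ I` are adjoined one at a time along a well-order extending
the order of `P`. Adjoining an isolated element is a pushout of the corresponding link, and
adjoining a limit element changes nothing up to isomorphism, by smoothness. This uses that cellular
morphisms are stable under all pushouts (`cellP_pushout`).

Next comes the classical reduction of directed colimits to chains. Choose upper bounds `u F` of the
finite subsets `F` of `P`, monotonically in `F`, and let `hull u T` be the lower set generated by
the `u F` with `F ⊆ T`; it is directed. By induction on the cardinality of `T`, `Hom(A, -)` preserves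
the colimit of `D` over `hull u T` (`homPreserves_hull`). If `T` is finite, then `hull u T` has a
greatest element. If `T` is infinite, then `T` is the union of a continuous chain, without last
term, of subsets of smaller cardinality; because `hull` depends only on finite subsets, the colimits
over their hulls form a smooth chain with cellular links and colimit `colimOn D (hull u T)`, and the
smallness of `A` applies (`homPreserves_of_chain`). For `T = P` the hull is all of `P`.
-/

universe w v u v₁ u₁ v₂ u₂

open CategoryTheory Limits Opposite

namespace Paper

variable {M : Type u} [Category.{v} M]

/-! ### Lifting properties, weak factorization systems -/

/-- The class of morphisms with the right lifting property against a set of arrows. -/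
def rlpSet (X : Set (Arrow M)) : MorphismProperty M :=
  fun _ _ f => ∀ a ∈ X, HasLiftingProperty a.hom f

/-- The right lifting property class of a class of morphisms. -/
def rlpC (L : MorphismProperty M) : MorphismProperty M :=
  fun _ _ f => ∀ ⦃A B : M⦄ (g : A ⟶ B), L g → HasLiftingProperty g f

/-- The left lifting property class of a class of morphisms. -/
def llpC (R : MorphismProperty M) : MorphismProperty M :=
  fun _ _ f => ∀ ⦃A B : M⦄ (g : A ⟶ B), R g → HasLiftingProperty f g

/-- A weak factorization system `(L, R)`. -/
structure IsWFS (L R : MorphismProperty M) : Prop where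
  rlp_eq : rlpC L = R
  llp_eq : llpC R = L
  factorization : ∀ ⦃A B : M⦄ (f : A ⟶ B),
    ∃ (Z : M) (i : A ⟶ Z) (p : Z ⟶ B), L i ∧ R p ∧ i ≫ p = f

/-! ### Posets, smooth and good diagrams -/

/-- `a` is the predecessor of `b`; equivalently `b` is isolated with predecessor `a`. -/
def IsSuccOf {P : Type w} [PartialOrder P] (a b : P) : Prop :=
  a < b ∧ ∀ c : P, c < b → c ≤ a

/-- A limit element of a good poset: not the least element and not isolated. -/
def IsLimitElem {P : Type w} [PartialOrder P] [OrderBot P] (b : P) : Prop :=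
  b ≠ ⊥ ∧ ¬ ∃ a : P, IsSuccOf a b

/-- A preorder is `κ`-directed if every subset of cardinality `< κ` has an upper bound. -/
def CardDirected (κ : Cardinal.{w}) (P : Type w) [Preorder P] : Prop :=
  ∀ s : Set P, Cardinal.mk s < κ → ∃ b : P, ∀ x ∈ s, x ≤ b

/-- A category is `κ`-filtered if every diagram indexed by a category with fewer
than `κ` morphisms admits a cocone. -/
def CardFiltered (κ : Cardinal.{v}) (J : Type u₁) [Category.{v₁} J] : Prop :=
  ∀ (A : Type v) [SmallCategory A], Cardinal.mk (Arrow A) < κ →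
    ∀ F : A ⥤ J, Nonempty (Cocone F)

section Smooth

variable {P : Type w} [PartialOrder P] (D : P ⥤ M)

/-- Restriction of a diagram to the initial segment `{y | y < b}`. -/
def restrictIio (b : P) : {y : P // y < b} ⥤ M :=
  Monotone.functor (f := fun y : {y : P // y < b} => (y : P)) (fun _ _ h => h) ⋙ D

/-- The canonical cocone on the restriction of `D` to `{y | y < b}` with point `D.obj b`. -/
def iioCocone (b : P) : Cocone (restrictIio D b) where
  pt := D.obj b
  ι :=
    { app := fun y => D.map (homOfLE y.2.le)
      naturality := fun y z f => by
        dsimp [restrictIio, Monotone.functor]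
        rw [Category.comp_id, ← D.map_comp]
        rfl }

/-- A diagram over a poset with a least element is smooth if at every limit element the
canonical cocone of the restriction to the strict initial segment is a colimit cocone. -/
def IsSmooth [OrderBot P] : Prop :=
  ∀ b : P, IsLimitElem b → Nonempty (IsColimit (iioCocone D b))

end Smooth

/-! ### Cellular morphisms and cofibrations -/

/-- `Q` contains the set of arrows `X`. -/
def ContainsX (X : Set (Arrow M)) (Q : MorphismProperty M) : Prop :=
  ∀ a ∈ X, Q a.hom

/-- `Q` is stable under pushouts of morphisms in `X` along arbitrary morphisms. -/
def StableUnderPushoutsOf (X : Set (Arrow M)) (Q : MorphismProperty M) : Prop :=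
  ∀ ⦃A B A' B' : M⦄ (u : A ⟶ A') (f : A ⟶ B) (g : A' ⟶ B') (v : B ⟶ B'),
    Arrow.mk f ∈ X → IsPushout u f g v → Q g

/-- `Q` is stable under transfinite compositions: for every smooth diagram over a
well-ordered set with least element, all of whose links lie in `Q`, the composite
(the component at `⊥` of any colimit cocone) lies in `Q`. -/
def StableUnderTransfiniteComposition (Q : MorphismProperty M) : Prop :=
  ∀ (β : Type v) [LinearOrder β] [OrderBot β], WellFoundedLT β →
    ∀ (D : β ⥤ M), IsSmooth D →
      (∀ (a b : β) (h : IsSuccOf a b), Q (D.map (homOfLE h.1.le))) →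
      ∀ (c : Cocone D), IsColimit c → Q (c.ι.app ⊥)

/-- `Q` is stable under retracts (in the arrow category). -/
def IsRetractOf {A B A' B' : M} (f : A ⟶ B) (g : A' ⟶ B') : Prop :=
  ∃ (iA : A ⟶ A') (rA : A' ⟶ A) (iB : B ⟶ B') (rB : B' ⟶ B),
    iA ≫ rA = 𝟙 A ∧ iB ≫ rB = 𝟙 B ∧ iA ≫ g = f ≫ iB ∧ rA ≫ f = g ≫ rB

def StableUnderRetracts (Q : MorphismProperty M) : Prop :=
  ∀ ⦃A B A' B' : M⦄ (f : A ⟶ B) (g : A' ⟶ B'), IsRetractOf f g → Q g → Q f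

/-- `Q` contains `X` and is closed under pushouts along `X` and transfinite compositions. -/
def IsCellClosed (X : Set (Arrow M)) (Q : MorphismProperty M) : Prop :=
  ContainsX X Q ∧ StableUnderPushoutsOf X Q ∧ StableUnderTransfiniteComposition Q

/-- The class of `X`-cellular morphisms: the smallest class containing `X` closed under
pushouts along morphisms of `X` and transfinite compositions. -/
def cellP (X : Set (Arrow M)) : MorphismProperty M :=
  fun _ _ f => ∀ Q : MorphismProperty M, IsCellClosed X Q → Q f

/-- The class of `X`-cofibrations: the smallest class containing `X` closed under
pushouts along morphisms of `X`, transfinite compositions and retracts. -/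
def cofP (X : Set (Arrow M)) : MorphismProperty M :=
  fun _ _ f => ∀ Q : MorphismProperty M, IsCellClosed X Q → StableUnderRetracts Q → Q f

/-! ### Smallness and presentability -/

/-- `Hom(A, -)` maps the colimit cocone `c` to a colimit cocone in types. -/
def CoyonedaPreserves (A : M) {J : Type u₁} [Category.{v₁} J] (D : J ⥤ M) (c : Cocone D) :
    Prop :=
  Nonempty (IsColimit ((coyoneda.obj (op A)).mapCocone c))

/-- `A` is `κ`-small relative to `X`: `Hom(A, -)` preserves colimits of smooth κ-directed
well-ordered chains whose links are `X`-cellular. -/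
def SmallRel (κ : Cardinal.{v}) (X : Set (Arrow M)) (A : M) : Prop :=
  ∀ (P : Type v) [LinearOrder P] [OrderBot P], WellFoundedLT P → CardDirected κ P →
    ∀ (D : P ⥤ M), IsSmooth D →
      (∀ (a b : P) (h : IsSuccOf a b), cellP X (D.map (homOfLE h.1.le))) →
      ∀ (c : Cocone D), IsColimit c → CoyonedaPreserves A D c

/-- `A` is strictly `κ`-small relative to `X`: `Hom(A, -)` preserves colimits of κ-directed
good (smooth, well-founded with bottom) diagrams whose links are `X`-cellular. -/
def StrictlySmallRel (κ : Cardinal.{v}) (X : Set (Arrow M)) (A : M) : Prop :=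
  ∀ (P : Type v) [PartialOrder P] [OrderBot P], WellFoundedLT P → CardDirected κ P →
    ∀ (D : P ⥤ M), IsSmooth D →
      (∀ (a b : P) (h : IsSuccOf a b), cellP X (D.map (homOfLE h.1.le))) →
      ∀ (c : Cocone D), IsColimit c → CoyonedaPreserves A D c

/-- `A` is `κ`-presentable: `Hom(A, -)` preserves `κ`-filtered colimits. -/
def IsCardinalPresentable (κ : Cardinal.{v}) (A : M) : Prop :=
  ∀ (J : Type v) [SmallCategory J], CardFiltered κ J →
    ∀ (D : J ⥤ M) (c : Cocone D), IsColimit c → CoyonedaPreserves A D c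

/-- `A` is presentable: `κ`-presentable for some regular cardinal `κ`. -/
def IsPresentableObj (A : M) : Prop :=
  ∃ κ : Cardinal.{v}, κ.IsRegular ∧ IsCardinalPresentable κ A

/-! ### Notions of cofibrant generation -/

/-- `X` is a (small) generating set: `X ⊆ L` and `X^□ = R`. -/
structure IsGeneratingSet (L R : MorphismProperty M) (X : Set (Arrow M)) : Prop where
  small : Small.{v} X
  subset : ∀ a ∈ X, L a.hom
  rlp : rlpSet X = R

def SetwiseCofGen (L R : MorphismProperty M) : Prop :=
  ∃ X : Set (Arrow M), IsGeneratingSet L R X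

def WeaklyCofGenBy (L R : MorphismProperty M) (X : Set (Arrow M)) : Prop :=
  IsGeneratingSet L R X ∧ cofP X = L

def CofGenBy (L R : MorphismProperty M) (X : Set (Arrow M)) (κ : Cardinal.{v}) : Prop :=
  IsGeneratingSet L R X ∧ ∀ a ∈ X, SmallRel κ X a.left

def StrictlyCofGenBy (L R : MorphismProperty M) (X : Set (Arrow M)) (κ : Cardinal.{v}) : Prop :=
  IsGeneratingSet L R X ∧ ∀ a ∈ X, StrictlySmallRel κ X a.left

def SemiPerfectlyCofGenBy (L R : MorphismProperty M) (X : Set (Arrow M)) (κ : Cardinal.{v}) :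
    Prop :=
  IsGeneratingSet L R X ∧ ∀ a ∈ X, IsCardinalPresentable κ a.left

def PerfectlyCofGenBy (L R : MorphismProperty M) (X : Set (Arrow M)) (κ : Cardinal.{v}) : Prop :=
  SemiPerfectlyCofGenBy L R X κ ∧ ∀ a ∈ X, IsCardinalPresentable κ a.right

def CofGen (L R : MorphismProperty M) : Prop :=
  ∃ (X : Set (Arrow M)) (κ : Cardinal.{v}), κ.IsRegular ∧ CofGenBy L R X κ

def StrictlyCofGen (L R : MorphismProperty M) : Prop :=
  ∃ (X : Set (Arrow M)) (κ : Cardinal.{v}), κ.IsRegular ∧ StrictlyCofGenBy L R X κ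

def SemiPerfectlyCofGen (L R : MorphismProperty M) : Prop :=
  ∃ (X : Set (Arrow M)) (κ : Cardinal.{v}), κ.IsRegular ∧ SemiPerfectlyCofGenBy L R X κ

def PerfectlyCofGen (L R : MorphismProperty M) : Prop :=
  ∃ (X : Set (Arrow M)) (κ : Cardinal.{v}), κ.IsRegular ∧ PerfectlyCofGenBy L R X κ

/-! ### Cofibrant objects -/

/-- `A` is `L`-cofibrant: the morphism from an initial object to `A` lies in `L`. -/
def CofibrantObj (L : MorphismProperty M) (A : M) : Prop :=
  ∀ ⦃I : M⦄ (hI : IsInitial I), L (hI.to A)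

/-- `A` is `R`-fibrant: the morphism from `A` to a terminal object lies in `R`. -/
def FibrantObj (R : MorphismProperty M) (A : M) : Prop :=
  ∀ ⦃T : M⦄ (hT : IsTerminal T), R (hT.from A)

/-- A set of objects closed under `λ`-small colimits (diagrams with fewer than `λ` morphisms). -/
def ClosedUnderColimitsCard (lam : Cardinal.{v}) (S : Set M) : Prop :=
  ∀ (J : Type v) [SmallCategory J], Cardinal.mk (Arrow J) < lam →
    ∀ (D : J ⥤ M) (c : Cocone D), IsColimit c → (∀ j, D.obj j ∈ S) → c.pt ∈ S

/-- The smallest class of objects containing the domains and codomains of `X` and closed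
under `λ`-small colimits in `M`. -/
def Atilde (X : Set (Arrow M)) (lam : Cardinal.{v}) : Set M :=
  { m | ∀ S : Set M, (∀ a ∈ X, a.left ∈ S ∧ a.right ∈ S) →
      ClosedUnderColimitsCard lam S → m ∈ S }

/-- `A(X, λ)`: the intersection of `Atilde X λ` with the cofibrant objects. -/
def Aset (L : MorphismProperty M) (X : Set (Arrow M)) (lam : Cardinal.{v}) : Set M :=
  { m | m ∈ Atilde X lam ∧ CofibrantObj L m }

/-- A set of objects is essentially small. -/
def EssentiallySmallSet (S : Set M) : Prop :=
  ∃ T : Set M, Small.{v} T ∧ T ⊆ S ∧ ∀ m ∈ S, ∃ t ∈ T, Nonempty (m ≅ t)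

/-- `A` is a `λ`-filtered colimit (in `M`) of objects from `S`. -/
def IsCardFilteredColimitOf (lam : Cardinal.{v}) (S : Set M) (A : M) : Prop :=
  ∃ J : Cat.{v, v}, CardFiltered lam J ∧
    ∃ D : J ⥤ M, (∀ j, D.obj j ∈ S) ∧ ∃ c : Cocone D, Nonempty (IsColimit c) ∧ c.pt = A

/-! ### Preaccessible and locally presentable categories -/

def PreaccessibleAt (lam : Cardinal.{v}) (C : Type u₁) [Category.{v} C] : Prop :=
  ∃ A : Set C, Small.{v} A ∧ (∀ a ∈ A, IsCardinalPresentable lam a) ∧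
    ∀ X : C, IsCardFilteredColimitOf lam A X

def Preaccessible (C : Type u₁) [Category.{v} C] : Prop :=
  ∃ lam : Cardinal.{v}, lam.IsRegular ∧ PreaccessibleAt lam C

def LocallyPresentable (C : Type u₁) [Category.{v} C] : Prop :=
  HasColimitsOfSize.{v, v} C ∧ Preaccessible C

/-! ### Vopěnka's principle -/

/-- A graph: a type with a binary relation. -/
structure Graph : Type (v + 1) where
  V : Type v
  E : V → V → Prop

/-- A homomorphism of graphs. -/
structure GraphHom (G H : Graph.{v}) : Type v where
  toFun : G.V → H.V
  map : ∀ {a b : G.V}, G.E a b → H.E (toFun a) (toFun b)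

/-- Vopěnka's principle: for every ordinal-indexed family of graphs there exist two distinct
indices and a homomorphism between the corresponding graphs; equivalently, the category of
graphs has no large discrete full subcategory. -/
def VopenkaPrinciple : Prop :=
  ∀ G : Ordinal.{v} → Graph.{v}, ∃ i j : Ordinal.{v}, i ≠ j ∧ Nonempty (GraphHom (G i) (G j))

/-! ### Closure properties of cellular morphisms -/

lemma cellP_isCellClosed (X : Set (Arrow M)) : IsCellClosed X (cellP X) :=
  ⟨fun a ha _ hQ => hQ.1 a ha,
   fun _ _ _ _ u f g v hf hp _ hQ => hQ.2.1 u f g v hf hp,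
   fun β _ _ hβ D hD hl c hc Q hQ =>
    hQ.2.2 β hβ D hD (fun a b h => hl a b h Q hQ) c hc⟩

/-- An isomorphism is the composite of a chain of length one. -/
lemma cellP_iso (X : Set (Arrow M)) {A B : M} (f : A ⟶ B) [IsIso f] : cellP X f := by
  let D : PUnit.{v + 1} ⥤ M := (Functor.const _).obj A
  have hbot : ∀ b : PUnit.{v + 1}, b = ⊥ := fun b => Subsingleton.elim _ _
  let c : Cocone D := ⟨B, { app := fun _ => f, naturality := by intros; simp [D] }⟩
  have hc : IsColimit c :=
    { desc := fun s => inv f ≫ s.ι.app ⊥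
      fac := fun s j => by
        cases j
        simp only [c, IsIso.hom_inv_id_assoc]
      uniq := fun s m hm => by
        rw [← hm ⊥]
        simp [c] }
  exact (cellP_isCellClosed X).2.2 PUnit ⟨wellFounded_lt⟩ D
    (fun b hb => (hb.1 (hbot b)).elim)
    (fun a b h => (lt_irrefl _ ((Subsingleton.elim a b) ▸ h.1)).elim) c hc

/-- A binary composite is a transfinite composition along the three-element chain. -/
lemma cellP_comp (X : Set (Arrow M)) {A B C : M} (f : A ⟶ B) (g : B ⟶ C)
    (hf : cellP X f) (hg : cellP X g) : cellP X (f ≫ g) := by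
  let e : ULift.{v} (Fin 3) ⥤ Fin 3 := Monotone.functor (f := ULift.down) (fun _ _ h => h)
  let D : ULift.{v} (Fin 3) ⥤ M := e ⋙ ComposableArrows.mk₂ f g
  let T : ULift.{v} (Fin 3) := ⟨2⟩
  have hT : IsTerminal T := IsTerminal.ofUniqueHom (fun x => homOfLE (Fin.le_last x.down))
    (fun _ _ => Subsingleton.elim _ _)
  let _ : OrderBot (ULift.{v} (Fin 3)) := { bot := ⟨0⟩, bot_le := fun x => Fin.zero_le x.down }
  have hwf : WellFoundedLT (ULift.{v} (Fin 3)) := inferInstance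
  have key := (cellP_isCellClosed X).2.2 (ULift.{v} (Fin 3)) hwf D ?_ ?_
    (coconeOfDiagramTerminal hT D) (colimitOfDiagramTerminal hT D)
  · exact key
  · rintro ⟨b⟩ hb
    fin_cases b
    · exact (hb.1 rfl).elim
    · exact (hb.2 ⟨⟨0⟩, by decide, by decide⟩).elim
    · exact (hb.2 ⟨⟨1⟩, by decide, by decide⟩).elim
  · rintro ⟨a⟩ ⟨b⟩ h
    have h1 := h.1
    have h2 := h.2
    fin_cases a <;> fin_cases b
    · exact absurd h1 (by decide)
    · exact hf
    · exact absurd (h2 ⟨1⟩ (by decide)) (by decide)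
    · exact absurd h1 (by decide)
    · exact absurd h1 (by decide)
    · exact hg
    · exact absurd h1 (by decide)
    · exact absurd h1 (by decide)
    · exact absurd h1 (by decide)

/-- A colimit cocone stays a colimit cocone after pushing out the whole diagram, cocone point
included, along a morphism out of its first object. -/
noncomputable def isColimitOfPushouts {β : Type w} [PartialOrder β] [OrderBot β]
    {D D' : β ⥤ M} (τ : D ⟶ D')
    (c : Cocone D) (c' : Cocone D') (t : c.pt ⟶ c'.pt)
    (ht : ∀ b, c.ι.app b ≫ t = τ.app b ≫ c'.ι.app b)
    (hp : ∀ b, IsPushout (D.map (homOfLE (bot_le : ⊥ ≤ b))) (τ.app ⊥) (τ.app b)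
      (D'.map (homOfLE (bot_le : ⊥ ≤ b))))
    (hp' : IsPushout (c.ι.app ⊥) (τ.app ⊥) t (c'.ι.app ⊥)) (hc : IsColimit c) :
    IsColimit c' where
  desc s := hp'.desc (hc.desc ((Cocone.precompose τ).obj s)) (s.ι.app ⊥) (by simp)
  fac s b := by
    apply (hp b).hom_ext
    · rw [← Category.assoc, ← ht, Category.assoc, IsPushout.inl_desc]
      simp
    · simp
  uniq s m hm := by
    apply hp'.hom_ext
    · rw [IsPushout.inl_desc]
      apply hc.hom_ext
      intro b
      rw [← Category.assoc, ht, Category.assoc, hm]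
      simp
    · rw [IsPushout.inr_desc, hm]

section

variable [HasColimitsOfSize.{v, v} M]

instance hasPushouts_of_cocomplete : HasPushouts M := by
  have := hasColimitsOfSizeShrink.{0, 0, v, v} M
  infer_instance

/-- A diagram can be pushed out along a morphism out of its first object. -/
lemma exists_pushoutDiagram {β : Type v} [PartialOrder β] [OrderBot β] (D : β ⥤ M) {A : M}
    (u : D.obj ⊥ ⟶ A) : ∃ (D' : β ⥤ M) (τ : D ⟶ D') (i : ∀ b, A ⟶ D'.obj b),
      (∀ b, IsPushout (D.map (homOfLE (bot_le : ⊥ ≤ b))) u (τ.app b) (i b)) ∧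
      ∀ (a b : β) (f : a ⟶ b), i a ≫ D'.map f = i b := by
  have hp : ∀ b, ∃ (Z : M) (l : D.obj b ⟶ Z) (r : A ⟶ Z),
      IsPushout (D.map (homOfLE (bot_le : ⊥ ≤ b))) u l r :=
    fun b => ⟨_, _, _, IsPushout.of_hasPushout _ _⟩
  choose Z l r hp using hp
  have hw : ∀ {a b : β} (f : a ⟶ b),
      D.map (homOfLE (bot_le : ⊥ ≤ a)) ≫ D.map f ≫ l b = u ≫ r b := fun {a b} f => by
    rw [← Category.assoc, ← D.map_comp]
    exact (hp b).w
  let m : ∀ {a b : β} (_ : a ⟶ b), Z a ⟶ Z b := fun {a b} f =>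
    (hp a).desc (D.map f ≫ l b) (r b) (hw f)
  have hl : ∀ {a b : β} (f : a ⟶ b), l a ≫ m f = D.map f ≫ l b :=
    fun f => (hp _).inl_desc _ _ _
  have hr : ∀ {a b : β} (f : a ⟶ b), r a ≫ m f = r b := fun f => (hp _).inr_desc _ _ _
  refine ⟨{ obj := Z
            map := m
            map_id := fun a => (hp a).hom_ext ?_ ?_
            map_comp := fun f g => (hp _).hom_ext ?_ ?_ },
    { app := l, naturality := fun a b f => (hl f).symm }, r, hp, fun a b f => hr f⟩
  · rw [hl, D.map_id, Category.id_comp, Category.comp_id]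
  · rw [hr, Category.comp_id]
  · rw [hl, ← Category.assoc, hl, Category.assoc, hl, D.map_comp, Category.assoc]
  · rw [hr, ← Category.assoc, hr, hr]

/-- The class of morphisms all of whose pushouts are cellular contains `X` and is closed under
pushouts of `X` and under transfinite composition, so it contains all cellular morphisms. -/
lemma cellP_pushout (X : Set (Arrow M)) {A B A' B' : M} {f : A ⟶ B} {u : A ⟶ A'} {t : B ⟶ B'}
    {g : A' ⟶ B'} (hf : cellP X f) (hp : IsPushout f u t g) : cellP X g := by
  have key : IsCellClosed X (fun A B (f : A ⟶ B) => ∀ ⦃A' B' : M⦄ (u : A ⟶ A') (t : B ⟶ B')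
      (g : A' ⟶ B'), IsPushout f u t g → cellP X g) := by
    refine ⟨?_, ?_, ?_⟩
    · intro a ha A' B' u t g hp
      exact (cellP_isCellClosed X).2.1 u a.hom g t ha hp.flip
    · intro A B A' B' u f g v hf hp A'' B'' u' t' g' hp'
      exact (cellP_isCellClosed X).2.1 (u ≫ u') f g' (v ≫ t') hf (hp.paste_horiz hp'.flip)
    · intro β _ _ hβ D hD hl c hc A' B' u t g hp
      obtain ⟨D', τ, i, hτ, hi⟩ := exists_pushoutDiagram D u
      have hmap : ∀ {a b : β} (f : a ⟶ b),
          IsPushout (D.map f) (τ.app a) (τ.app b) (D'.map f) := fun {a b} f => by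
        refine IsPushout.of_left ?_ (τ.naturality f) (hτ a)
        rw [hi, ← D.map_comp]
        exact hτ b
      have hw : ∀ b, D.map (homOfLE (bot_le : ⊥ ≤ b)) ≫ c.ι.app b ≫ t = u ≫ g := fun b => by
        rw [← Category.assoc, c.w, hp.w]
      let d : ∀ b, D'.obj b ⟶ B' := fun b => (hτ b).desc (c.ι.app b ≫ t) g (hw b)
      have hd : ∀ b, τ.app b ≫ d b = c.ι.app b ≫ t := fun b => (hτ b).inl_desc _ _ _
      have hd' : ∀ b, i b ≫ d b = g := fun b => (hτ b).inr_desc _ _ _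
      let c' : Cocone D' :=
        { pt := B'
          ι :=
            { app := d
              naturality := fun a b f => by
                change D'.map f ≫ d b = d a ≫ 𝟙 B'
                rw [Category.comp_id]
                apply (hτ a).hom_ext
                · rw [← Category.assoc, ← τ.naturality, Category.assoc, hd, hd,
                    ← Category.assoc, c.w]
                · rw [← Category.assoc, hi, hd', hd'] } }
      have hD' : IsSmooth D' := by
        intro b hb
        obtain ⟨hc⟩ := hD b hb
        let _ : OrderBot {y : β // y < b} :=
          { bot := ⟨⊥, bot_lt_iff_ne_bot.2 hb.1⟩, bot_le := fun y => (bot_le : ⊥ ≤ y.1) }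
        exact ⟨isColimitOfPushouts (β := {y : β // y < b})
          (Functor.whiskerLeft _ τ) (iioCocone D b) (iioCocone D' b)
          (τ.app b) (fun y => τ.naturality _) (fun y => hmap _) (hmap _) hc⟩
      -- The first object of `D'` is only isomorphic to `A'`, by means of `i ⊥`.
      have hid : IsIso (D.map (homOfLE (bot_le : (⊥ : β) ≤ ⊥))) := by
        have : homOfLE (bot_le : (⊥ : β) ≤ ⊥) = 𝟙 _ := rfl
        rw [this, D.map_id]
        infer_instance
      have hid' : IsIso (i ⊥) := (hτ ⊥).isIso_inr_of_isIso
      rw [← hd' ⊥]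
      refine cellP_comp X _ _ (cellP_iso X _) ?_
      have hbot : IsPushout (c.ι.app ⊥) (τ.app ⊥) t (d ⊥) := by
        refine IsPushout.of_left (h₁₁ := D.map (homOfLE (bot_le : (⊥ : β) ≤ ⊥))) ?_ (hd ⊥).symm
          (hτ ⊥)
        rw [c.w, hd']
        exact hp
      exact (cellP_isCellClosed X).2.2 β hβ D' hD' (fun a b h => hl a b h _ _ _ (hmap _)) c'
        (isColimitOfPushouts τ c c' t (fun b => (hd b).symm) (fun b => hmap _) hbot hc)
  exact hf _ key u t g hp

end

/-! ### Colimits over subsets of the indexing poset -/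

section

variable [HasColimitsOfSize.{v, v} M] {P : Type v} [PartialOrder P] (D : P ⥤ M)

/-- The restriction of a diagram to a subset of its indexing poset. -/
def restrictSet (S : Set P) : S ⥤ M :=
  Monotone.functor (f := fun y : S => (y : P)) (fun _ _ h => h) ⋙ D

/-- The colimit of `D` over the subset `S`. -/
noncomputable def colimOn (S : Set P) : M := colimit (restrictSet D S)

/-- The coprojections of `colimOn`. -/
noncomputable def inOn {S : Set P} (x : P) (hx : x ∈ S) : D.obj x ⟶ colimOn D S :=
  colimit.ι (restrictSet D S) ⟨x, hx⟩

lemma map_inOn {S : Set P} {x y : P} (hx : x ∈ S) (hy : y ∈ S) (h : x ≤ y) :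
    D.map (homOfLE h) ≫ inOn D y hy = inOn D x hx :=
  colimit.w (restrictSet D S) (homOfLE (show (⟨x, hx⟩ : S) ≤ ⟨y, hy⟩ from h))

lemma colimOn_hom_ext {S : Set P} {Z : M} {f g : colimOn D S ⟶ Z}
    (h : ∀ x (hx : x ∈ S), inOn D x hx ≫ f = inOn D x hx ≫ g) : f = g :=
  colimit.hom_ext fun j => h j.1 j.2

lemma exists_colimOn_desc {S : Set P} {Z : M} (k : ∀ x ∈ S, D.obj x ⟶ Z)
    (hk : ∀ x y (hx : x ∈ S) (hy : y ∈ S) (h : x ≤ y), D.map (homOfLE h) ≫ k y hy = k x hx) :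
    ∃ d : colimOn D S ⟶ Z, ∀ x hx, inOn D x hx ≫ d = k x hx := by
  let s : Cocone (restrictSet D S) :=
    { pt := Z
      ι :=
        { app := fun j => k j.1 j.2
          naturality := fun i j f => by
            change D.map _ ≫ k j.1 j.2 = k i.1 i.2 ≫ 𝟙 Z
            rw [Category.comp_id]
            exact hk _ _ i.2 j.2 (leOfHom f) } }
  exact ⟨colimit.desc _ s, fun x hx => colimit.ι_desc s ⟨x, hx⟩⟩

/-- The comparison morphism between colimits over nested subsets. -/
noncomputable def mapOn {S T : Set P} (h : S ⊆ T) : colimOn D S ⟶ colimOn D T :=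
  (exists_colimOn_desc D (fun x hx => inOn D x (h hx))
    (fun _ _ hx hy hxy => map_inOn D (h hx) (h hy) hxy)).choose

lemma inOn_mapOn {S T : Set P} (h : S ⊆ T) (x : P) (hx : x ∈ S) :
    inOn D x hx ≫ mapOn D h = inOn D x (h hx) :=
  (exists_colimOn_desc D (fun x hx => inOn D x (h hx))
    (fun _ _ hx hy hxy => map_inOn D (h hx) (h hy) hxy)).choose_spec x hx

lemma mapOn_refl {S : Set P} (h : S ⊆ S) : mapOn D h = 𝟙 _ :=
  colimOn_hom_ext D fun x hx => by rw [inOn_mapOn, Category.comp_id]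

lemma mapOn_comp {S T U : Set P} (h : S ⊆ T) (h' : T ⊆ U) :
    mapOn D h ≫ mapOn D h' = mapOn D (h.trans h') :=
  colimOn_hom_ext D fun x hx => by
    rw [← Category.assoc, inOn_mapOn, inOn_mapOn, inOn_mapOn]

/-- `colimOn` as a functor of the subset. -/
noncomputable def colimOnFunctor : Set P ⥤ M where
  obj S := colimOn D S
  map f := mapOn D (leOfHom f)
  map_id _ := mapOn_refl D _
  map_comp _ _ := (mapOn_comp D _ _).symm

/-- The canonical cocone from a chain of subsets to a common superset. -/
noncomputable def unionCocone {J : Type v} [PartialOrder J] (F : J ⥤ Set P) {K : Set P}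
    (hF : ∀ j, F.obj j ⊆ K) : Cocone (F ⋙ colimOnFunctor D) where
  pt := colimOn D K
  ι :=
    { app := fun j => mapOn D (hF j)
      naturality := fun i j f => by
        change mapOn D _ ≫ mapOn D _ = mapOn D _ ≫ 𝟙 _
        rw [Category.comp_id, mapOn_comp] }

/-- The colimit over the union of a chain of subsets is the colimit of the colimits. -/
lemma unionCocone_isColimit {J : Type v} [LinearOrder J] (F : J ⥤ Set P) {K : Set P}
    (hF : ∀ j, F.obj j ⊆ K) (hK : ∀ x ∈ K, ∃ j, x ∈ F.obj j) :
    Nonempty (IsColimit (unionCocone D F hF)) := by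
  have hmono : ∀ {i j : J}, i ≤ j → F.obj i ⊆ F.obj j := fun h => leOfHom (F.map (homOfLE h))
  have main : ∀ s : Cocone (F ⋙ colimOnFunctor D), ∃ d : colimOn D K ⟶ s.pt,
      ∀ j, mapOn D (hF j) ≫ d = s.ι.app j := by
    intro s
    obtain ⟨σ, hσ⟩ : ∃ σ : ∀ j, colimOn D (F.obj j) ⟶ s.pt, ∀ j, σ j = s.ι.app j :=
      ⟨fun j => s.ι.app j, fun _ => rfl⟩
    have hs : ∀ {i j : J} (h : i ≤ j), mapOn D (hmono h) ≫ σ j = σ i := fun {i j} h => by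
      rw [hσ, hσ]
      exact s.w (homOfLE h)
    simp only [← hσ]
    have hindep : ∀ (i j : J) x (hi : x ∈ F.obj i) (hj : x ∈ F.obj j),
        inOn D x hi ≫ σ i = inOn D x hj ≫ σ j := by
      intro i j x hi hj
      rcases le_total i j with h | h
      · rw [← hs h, ← Category.assoc, inOn_mapOn]
      · rw [← hs h, ← Category.assoc, inOn_mapOn]
    choose idx hidx using hK
    obtain ⟨d, hd⟩ := exists_colimOn_desc D (S := K)
      (fun x hx => inOn D x (hidx x hx) ≫ σ (idx x hx)) (by
        intro x y hx hy h
        have h1 : x ∈ F.obj (max (idx x hx) (idx y hy)) := hmono (le_max_left _ _) (hidx x hx)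
        have h2 : y ∈ F.obj (max (idx x hx) (idx y hy)) := hmono (le_max_right _ _) (hidx y hy)
        rw [hindep _ _ x _ h1, hindep _ _ y _ h2, ← Category.assoc, map_inOn D h1 h2 h])
    refine ⟨d, fun j => colimOn_hom_ext D fun x hx => ?_⟩
    rw [← Category.assoc, inOn_mapOn, hd]
    exact hindep _ _ _ _ _
  choose d hd using main
  have huniq : ∀ (s : Cocone (F ⋙ colimOnFunctor D)) (m : colimOn D K ⟶ s.pt),
      (∀ j, mapOn D (hF j) ≫ m = s.ι.app j) → m = d s := by
    intro s m hm
    refine colimOn_hom_ext D fun x hx => ?_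
    obtain ⟨j, hj⟩ := hK x hx
    rw [← inOn_mapOn D (hF j) x hj, Category.assoc, Category.assoc, hd, hm]
  exact ⟨{ desc := d
           fac := hd
           uniq := huniq }⟩

/-- A chain of subsets that is continuous at limit elements yields a smooth chain of colimits. -/
lemma chain_smooth {J : Type v} [LinearOrder J] [OrderBot J] (F : J ⥤ Set P)
    (hF : ∀ b : J, IsLimitElem b → ∀ x ∈ F.obj b, ∃ a < b, x ∈ F.obj a) :
    IsSmooth (F ⋙ colimOnFunctor D) := by
  intro b hb
  exact unionCocone_isColimit D (J := {y : J // y < b})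
    (Monotone.functor (f := fun y : {y : J // y < b} => (y : J)) (fun _ _ h => h) ⋙ F)
    (K := F.obj b) (fun j => leOfHom (F.map (homOfLE j.2.le)))
    (fun x hx => by
      obtain ⟨a, ha, hxa⟩ := hF b hb x hx
      exact ⟨⟨a, ha⟩, hxa⟩)

/-! ### Nested lower sets induce cellular morphisms -/

/-- Adjoining a new element `a` on top of a lower set `I` amounts to a pushout along a morphism
`g : E ⟶ D.obj a` whose source `E` receives a jointly epimorphic family from the objects strictly
below `a`. -/
lemma mapOn_insert_isPushout {I K : Set P} (hI : IsLowerSet I) {a : P} (ha : a ∉ I)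
    (hlt : ∀ y < a, y ∈ I) (hK : ∀ x, x ∈ K ↔ x ∈ I ∨ x = a) (hIK : I ⊆ K) (haK : a ∈ K)
    {E : M} (e : ∀ y < a, D.obj y ⟶ E) (g : E ⟶ D.obj a) (h : E ⟶ colimOn D I)
    (hg : ∀ y (hy : y < a), e y hy ≫ g = D.map (homOfLE hy.le))
    (hh : ∀ y (hy : y < a), e y hy ≫ h = inOn D y (hlt y hy))
    (hepi : ∀ {Z : M} (k k' : E ⟶ Z), (∀ y hy, e y hy ≫ k = e y hy ≫ k') → k = k') :
    IsPushout g h (inOn D a haK) (mapOn D hIK) := by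
  have main : ∀ s : PushoutCocone g h, ∃ d : colimOn D K ⟶ s.pt,
      inOn D a haK ≫ d = s.inl ∧ mapOn D hIK ≫ d = s.inr := by
    classical
    intro s
    have hlow : ∀ y (hy : y < a),
        D.map (homOfLE hy.le) ≫ s.inl = inOn D y (hlt y hy) ≫ s.inr := by
      intro y hy
      rw [← hg y hy, ← hh y hy, Category.assoc, Category.assoc, s.condition]
    let k : ∀ x ∈ K, D.obj x ⟶ s.pt := fun x hx =>
      if hxI : x ∈ I then inOn D x hxI ≫ s.inr
      else D.map (eqToHom (((hK x).1 hx).resolve_left hxI)) ≫ s.inl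
    have hk1 : ∀ x (hx : x ∈ K) (hxI : x ∈ I), k x hx = inOn D x hxI ≫ s.inr :=
      fun x hx hxI => dif_pos hxI
    have hk2 : k a haK = s.inl := by
      simp only [k, dif_neg ha, eqToHom_refl, D.map_id, Category.id_comp]
    obtain ⟨d, hd⟩ := exists_colimOn_desc D k (by
      intro x y hx hy hxy
      by_cases hyI : y ∈ I
      · rw [hk1 y hy hyI, hk1 x hx (hI hxy hyI), ← Category.assoc, map_inOn]
      · obtain rfl := ((hK y).1 hy).resolve_left hyI
        rcases hxy.lt_or_eq with hlt' | rfl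
        · rw [hk2, hk1 x hx (hlt x hlt'), hlow x hlt']
        · have : homOfLE hxy = 𝟙 _ := rfl
          rw [this, D.map_id, Category.id_comp])
    refine ⟨d, (hd a haK).trans hk2, colimOn_hom_ext D fun x hx => ?_⟩
    rw [← Category.assoc, inOn_mapOn, hd x (hIK hx), hk1 x (hIK hx) hx]
  choose d hd1 hd2 using main
  refine ⟨⟨hepi _ _ fun y hy => ?_⟩,
    ⟨PushoutCocone.IsColimit.mk _ d hd1 hd2 fun s m h1 h2 => colimOn_hom_ext D fun x hx => ?_⟩⟩
  · rw [← Category.assoc, hg, ← Category.assoc, hh, inOn_mapOn, map_inOn D _ _ hy.le]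
  · rcases (hK x).1 hx with hxI | rfl
    · rw [← inOn_mapOn D hIK x hxI, Category.assoc, Category.assoc, hd2]
      exact congrArg _ h2
    · rw [hd1]
      exact h1

variable [OrderBot P] {D}

/-- Adjoining a single element `a` is cellular: for isolated `a` it is a pushout of the link ending
at `a`, and for a limit element it is a pushout of an identity. -/
lemma cellP_mapOn_insert (X : Set (Arrow M)) (hD : IsSmooth D)
    (hl : ∀ (a b : P) (h : IsSuccOf a b), cellP X (D.map (homOfLE h.1.le)))
    {I K : Set P} (hI : IsLowerSet I) (hbot : ⊥ ∈ I) {a : P} (ha : a ∉ I)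
    (hlt : ∀ y < a, y ∈ I) (hK : ∀ x, x ∈ K ↔ x ∈ I ∨ x = a) (hIK : I ⊆ K) :
    cellP X (mapOn D hIK) := by
  have haK : a ∈ K := (hK a).2 (Or.inr rfl)
  by_cases hs : ∃ p, IsSuccOf p a
  · obtain ⟨p, hp⟩ := hs
    refine cellP_pushout X (hl p a hp) (mapOn_insert_isPushout D hI ha hlt hK hIK haK
      (fun y hy => D.map (homOfLE (hp.2 y hy))) _ (inOn D p (hlt p hp.1)) ?_ ?_ ?_)
    · intro y hy
      rw [← D.map_comp]
      rfl
    · intro y hy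
      rw [map_inOn]
    · intro Z k k' hkk
      have := hkk p hp.1
      have e : homOfLE (hp.2 p hp.1) = 𝟙 _ := rfl
      simpa only [e, D.map_id, Category.id_comp] using this
  · obtain ⟨hc⟩ := hD a ⟨fun h => ha (h ▸ hbot), hs⟩
    let s : Cocone (restrictIio D a) :=
      { pt := colimOn D I
        ι :=
          { app := fun y => inOn D y.1 (hlt y.1 y.2)
            naturality := fun y z f => by
              change D.map _ ≫ inOn D _ _ = inOn D _ _ ≫ 𝟙 _
              rw [Category.comp_id]
              exact map_inOn D _ _ (leOfHom f) } }
    refine cellP_pushout X (cellP_iso X (𝟙 (D.obj a))) (mapOn_insert_isPushout D hI ha hlt hK hIK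
      haK (fun y hy => D.map (homOfLE hy.le)) _ (hc.desc s) ?_ ?_ ?_)
    · intro y hy
      rw [Category.comp_id]
    · intro y hy
      exact hc.fac s ⟨y, hy⟩
    · intro Z k k' hkk
      exact hc.hom_ext fun y => hkk y.1 y.2

/-- If `P` embeds monotonically into a well-order `β` as the complement of the top element, the
elements of `J \ I` can be adjoined to `I` one at a time in the order of `β`. -/
lemma cellP_mapOn_aux (X : Set (Arrow M)) (hD : IsSmooth D)
    (hl : ∀ (a b : P) (h : IsSuccOf a b), cellP X (D.map (homOfLE h.1.le)))
    {I J : Set P} (hI : IsLowerSet I) (hJ : IsLowerSet J) (hbot : ⊥ ∈ I) (hIJ : I ⊆ J)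
    {β : Type v} [LinearOrder β] [OrderBot β] [OrderTop β] (hβ : WellFoundedLT β) (e : P → β)
    (he : ∀ {x y : P}, x < y → e x < e y) (hinj : ∀ {x y : P}, e x = e y → x = y)
    (hsurj : ∀ {b : β}, b < ⊤ → ∃ x, e x = b) (htop : ∀ x, e x < ⊤) :
    cellP X (mapOn D hIJ) := by
  let F : β ⥤ Set P := Monotone.functor (f := fun b => I ∪ {x | x ∈ J ∧ e x < b})
    (fun b c h => Set.union_subset_union_right _ fun x hx => ⟨hx.1, hx.2.trans_le h⟩)
  have hFm : ∀ b x, x ∈ F.obj b ↔ x ∈ I ∨ (x ∈ J ∧ e x < b) := fun b x => Iff.rfl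
  have hFl : ∀ b, IsLowerSet (F.obj b) := by
    intro b x y hyx hx
    rcases (hFm _ _).1 hx with hx | hx
    · exact (hFm _ _).2 (Or.inl (hI hyx hx))
    · refine (hFm _ _).2 (Or.inr ⟨hJ hyx hx.1, ?_⟩)
      rcases hyx.lt_or_eq with h | rfl
      · exact (he h).trans hx.2
      · exact hx.2
  have hFJ : ∀ b, F.obj b ⊆ J := fun b x hx =>
    ((hFm b x).1 hx).elim (fun h => hIJ h) (fun h => h.1)
  have hF0 : F.obj ⊥ = I := by
    ext x
    rw [hFm]
    exact ⟨fun h => h.resolve_right fun h => not_lt_bot h.2, Or.inl⟩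
  obtain ⟨hc⟩ := unionCocone_isColimit D F hFJ
    (fun x hx => ⟨⊤, (hFm _ _).2 (Or.inr ⟨hx, htop x⟩)⟩)
  have key : cellP X (mapOn D (hFJ ⊥)) := by
    refine (cellP_isCellClosed X).2.2 β hβ (F ⋙ colimOnFunctor D) ?_ ?_ _ hc
    · refine chain_smooth D F fun b hb x hx => ?_
      rcases (hFm _ _).1 hx with hx | hx
      · exact ⟨⊥, bot_lt_iff_ne_bot.2 hb.1, (hFm _ _).2 (Or.inl hx)⟩
      · by_contra hno
        exact hb.2 ⟨e x, hx.2, fun c hc => not_lt.1 fun h =>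
          hno ⟨c, hc, (hFm _ _).2 (Or.inr ⟨hx.1, h⟩)⟩⟩
    · intro a b h
      have hab : F.obj a ⊆ F.obj b := leOfHom (F.map (homOfLE h.1.le))
      obtain ⟨p, rfl⟩ := hsurj (h.1.trans_le le_top)
      change cellP X (mapOn D hab)
      have hnew : ∀ x, x ∈ F.obj b → x ∈ F.obj (e p) ∨ (x ∈ J ∧ x = p) := by
        intro x hx
        rcases (hFm _ _).1 hx with hx | hx
        · exact Or.inl ((hFm _ _).2 (Or.inl hx))
        · rcases (h.2 _ hx.2).lt_or_eq with h' | h'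
          · exact Or.inl ((hFm _ _).2 (Or.inr ⟨hx.1, h'⟩))
          · exact Or.inr ⟨hx.1, hinj h'⟩
      by_cases hp : p ∈ J ∧ p ∉ F.obj (e p)
      · refine cellP_mapOn_insert X hD hl (hFl _) ((hFm _ _).2 (Or.inl hbot)) hp.2
          (fun y hy => (hFm _ _).2 (Or.inr ⟨hJ hy.le hp.1, he hy⟩)) (fun x => ⟨fun hx => ?_, ?_⟩) hab
        · exact (hnew x hx).imp_right And.right
        · rintro (hx | rfl)
          · exact hab hx
          · exact (hFm _ _).2 (Or.inr ⟨hp.1, h.1⟩)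
      · have heq : F.obj b = F.obj (e p) := by
          refine Set.Subset.antisymm (fun x hx => ?_) hab
          rcases hnew x hx with hx | ⟨hxJ, rfl⟩
          · exact hx
          · by_contra hx'
            exact hp ⟨hxJ, hx'⟩
        generalize F.obj b = B at hab heq
        subst heq
        rw [mapOn_refl]
        exact cellP_iso X _
  have transfer : ∀ S (_ : S = I) (hS : S ⊆ J), cellP X (mapOn D hS) → cellP X (mapOn D hIJ) := by
    rintro S rfl hS h
    exact h
  exact transfer _ hF0 _ key

/-- For lower sets `I ⊆ J` of the index of a good diagram with cellular links, the comparison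
morphism is cellular. -/
lemma cellP_mapOn (X : Set (Arrow M)) [WellFoundedLT P] (hD : IsSmooth D)
    (hl : ∀ (a b : P) (h : IsSuccOf a b), cellP X (D.map (homOfLE h.1.le)))
    {I J : Set P} (hI : IsLowerSet I) (hJ : IsLowerSet J) (hbot : ⊥ ∈ I) (hIJ : I ⊆ J) :
    cellP X (mapOn D hIJ) := by
  let _ : OrderBot (WithTop (WellOrderExtension P)) := WellFoundedLT.toOrderBot _
  refine cellP_mapOn_aux X hD hl hI hJ hbot hIJ (β := WithTop (WellOrderExtension P))
    inferInstance (fun x => WithTop.some (toWellOrderExtension x)) ?_ ?_ ?_ ?_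
  · exact fun h => WithTop.coe_lt_coe.2 (toWellOrderExtension_strictMono h)
  · exact fun h => toWellOrderExtension.injective (WithTop.coe_injective h)
  · intro b hb
    obtain ⟨c, rfl⟩ := WithTop.ne_top_iff_exists.1 hb.ne
    exact ⟨toWellOrderExtension.symm c, by simp⟩
  · exact fun x => WithTop.coe_lt_top _

end

/-! ### Homs into colimits over lower sets -/

/-- `Hom(A, -)` preserves the colimit of `D` over `I`, spelled out elementwise for directed `I`:
each morphism to the colimit factors through some `D.obj x`, essentially uniquely. -/
def HomPreserves [HasColimitsOfSize.{v, v} M] {P : Type v} [PartialOrder P] (D : P ⥤ M) (A : M)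
    (I : Set P) : Prop :=
  (∀ f : A ⟶ colimOn D I, ∃ (x : P) (hx : x ∈ I) (g : A ⟶ D.obj x), g ≫ inOn D x hx = f) ∧
  ∀ (x : P) (hx : x ∈ I) (g g' : A ⟶ D.obj x), g ≫ inOn D x hx = g' ≫ inOn D x hx →
    ∃ y ∈ I, ∃ h : x ≤ y, g ≫ D.map (homOfLE h) = g' ≫ D.map (homOfLE h)

section

variable [HasColimitsOfSize.{v, v} M] {P : Type v} [PartialOrder P] {D : P ⥤ M} {A : M}

lemma homPreserves_of_isGreatest {I : Set P} {t : P} (ht : IsGreatest I t) :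
    HomPreserves D A I := by
  obtain ⟨d, hd⟩ := exists_colimOn_desc D (S := I) (fun x hx => D.map (homOfLE (ht.2 hx)))
    (fun x y hx hy h => by
      rw [← D.map_comp]
      rfl)
  have hdt : d ≫ inOn D t ht.1 = 𝟙 _ := colimOn_hom_ext D fun x hx => by
    rw [← Category.assoc, hd, map_inOn, Category.comp_id]
  refine ⟨fun f => ⟨t, ht.1, f ≫ d, by rw [Category.assoc, hdt, Category.comp_id]⟩,
    fun x hx g g' h => ⟨t, ht.1, ht.2 hx, ?_⟩⟩
  rw [← hd x hx, ← Category.assoc, h, Category.assoc]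

variable [OrderBot P]

/-- The colimits of a good diagram with cellular links over a continuous chain of lower sets form
a smooth chain with cellular links, to which the smallness of `A` applies. -/
lemma homPreserves_of_chain {X : Set (Arrow M)} (hA : SmallRel Cardinal.aleph0 X A)
    [WellFoundedLT P] (hD : IsSmooth D)
    (hl : ∀ (a b : P) (h : IsSuccOf a b), cellP X (D.map (homOfLE h.1.le)))
    {J : Type v} [LinearOrder J] [OrderBot J] (hJ : WellFoundedLT J) (F : J ⥤ Set P)
    (hF : ∀ j, IsLowerSet (F.obj j)) (hbot : ∀ j, ⊥ ∈ F.obj j)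
    (hlim : ∀ b : J, IsLimitElem b → ∀ x ∈ F.obj b, ∃ a < b, x ∈ F.obj a)
    {K : Set P} (hFK : ∀ j, F.obj j ⊆ K) (hK : ∀ x ∈ K, ∃ j, x ∈ F.obj j)
    (ih : ∀ j, HomPreserves D A (F.obj j)) : HomPreserves D A K := by
  obtain ⟨hc⟩ := unionCocone_isColimit D F hFK hK
  have hdir : CardDirected Cardinal.aleph0 J := by
    intro s hs
    have : Finite s := Cardinal.lt_aleph0_iff_finite.1 hs
    exact s.toFinite.bddAbove
  obtain ⟨hAc⟩ := hA J hJ hdir (F ⋙ colimOnFunctor D) (chain_smooth D F hlim)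
    (fun a b h => cellP_mapOn X hD hl (hF a) (hF b) (hbot a) _) _ hc
  refine ⟨fun f => ?_, fun x hx g g' hgg => ?_⟩
  · obtain ⟨j, f', hf'⟩ := Types.jointly_surjective _ hAc f
    obtain ⟨x, hx, g, hg⟩ := (ih j).1 f'
    refine ⟨x, hFK j hx, g, ?_⟩
    rw [← inOn_mapOn D (hFK j) x hx, ← Category.assoc, hg]
    exact hf'
  · obtain ⟨j, hj⟩ := hK x hx
    have heq : (g ≫ inOn D x hj) ≫ mapOn D (hFK j) = (g' ≫ inOn D x hj) ≫ mapOn D (hFK j) := by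
      rw [Category.assoc, Category.assoc, inOn_mapOn, hgg]
    obtain ⟨k, φ, hk⟩ := (Types.FilteredColimit.isColimit_eq_iff' hAc
      (g ≫ inOn D x hj) (g' ≫ inOn D x hj)).1 heq
    have hjk : F.obj j ⊆ F.obj k := leOfHom (F.map φ)
    have hk' : (g ≫ inOn D x hj) ≫ mapOn D hjk = (g' ≫ inOn D x hj) ≫ mapOn D hjk := hk
    rw [Category.assoc, Category.assoc, inOn_mapOn] at hk'
    obtain ⟨y, hy, h⟩ := (ih k).2 x (hjk hj) g g' hk'
    exact ⟨y, hFK k hy, h⟩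

end

/-! ### Directed hulls -/

/-- Upper bounds of finite subsets of a directed poset can be chosen monotonically. -/
lemma exists_monotone_upperBound {P : Type v} [PartialOrder P]
    (hP : CardDirected Cardinal.aleph0 P) :
    ∃ u : Finset P → P, Monotone u ∧ ∀ (F : Finset P), ∀ x ∈ F, x ≤ u F := by
  classical
  have hub : ∀ F : Finset P, ∃ b, ∀ x ∈ F, x ≤ b := fun F =>
    hP F (Cardinal.lt_aleph0_iff_finite.2 F.finite_toSet)
  choose ub hub using hub
  -- `u F` is an upper bound of `F` and of the values of `u` on all proper subsets of `F`.
  let H : ∀ F : Finset P, (∀ G : Finset P, G ⊂ F → P) → P := fun F rec =>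
    ub (F ∪ F.ssubsets.attach.image fun G => rec G.1 (Finset.mem_ssubsets.1 G.2))
  let u : Finset P → P := Finset.strongInduction (p := fun _ => P) H
  have hu : ∀ F, u F = ub (F ∪ F.ssubsets.attach.image fun G => u G.1) := fun F =>
    Finset.strongInduction_eq (p := fun _ => P) H F
  refine ⟨u, fun G F hGF => ?_, fun F x hx => ?_⟩
  · rcases (show G ⊆ F from hGF).eq_or_ssubset with rfl | h
    · exact le_rfl
    · rw [hu F]
      exact hub _ _ (Finset.mem_union_right _
        (Finset.mem_image.2 ⟨⟨G, Finset.mem_ssubsets.2 h⟩, Finset.mem_attach _ _, rfl⟩))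
  · rw [hu F]
    exact hub _ _ (Finset.mem_union_left _ hx)

/-- The lower set generated by the values of `u` on the finite subsets of `T`. For a monotone `u`
choosing upper bounds, it is a directed lower set containing `T`. -/
def hull {P : Type v} [PartialOrder P] (u : Finset P → P) (T : Set P) : Set P :=
  {x | ∃ F : Finset P, (F : Set P) ⊆ T ∧ x ≤ u F}

section

variable {P : Type v} [PartialOrder P] {u : Finset P → P}

lemma hull_mono {S T : Set P} (h : S ⊆ T) : hull u S ⊆ hull u T :=
  fun _ ⟨F, hF, hx⟩ => ⟨F, hF.trans h, hx⟩

lemma hull_isLowerSet (T : Set P) : IsLowerSet (hull u T) :=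
  fun _ _ hyx ⟨F, hF, hx⟩ => ⟨F, hF, hyx.trans hx⟩

lemma bot_mem_hull [OrderBot P] (T : Set P) : ⊥ ∈ hull u T :=
  ⟨∅, by simp, bot_le⟩

lemma isGreatest_hull (hu : Monotone u) (T : Finset P) : IsGreatest (hull u (T : Set P)) (u T) :=
  ⟨⟨T, subset_rfl, le_rfl⟩, fun _ ⟨_, hF, hx⟩ => hx.trans (hu (Finset.coe_subset.1 hF))⟩

/-- Since `hull` only depends on finite subsets, it commutes with directed unions. -/
lemma exists_mem_hull {β : Type v} [LinearOrder β] {e : β → P} {c : Set β} (hc : c.Nonempty)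
    {T : Set P} (hT : ∀ x ∈ T, ∃ b ∈ c, ∃ i < b, e i = x) {x : P} (hx : x ∈ hull u T) :
    ∃ b ∈ c, x ∈ hull u (e '' Set.Iio b) := by
  obtain ⟨F, hF, hx⟩ := hx
  obtain ⟨b, hb, hFb⟩ := DirectedOn.exists_mem_subset_of_finset_subset_biUnion
    (f := fun b => e '' Set.Iio b) (c := c) hc (fun i hi j hj =>
      ⟨max i j, max_rec' (· ∈ c) hi hj,
        Set.image_mono (Set.Iio_subset_Iio (le_max_left i j)),
        Set.image_mono (Set.Iio_subset_Iio (le_max_right i j))⟩) (s := F) (fun y hy => by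
      obtain ⟨b, hb, i, hi, rfl⟩ := hT y (hF hy)
      exact Set.mem_biUnion hb ⟨i, hi, rfl⟩)
  exact ⟨b, hb, F, hFb, hx⟩

variable [HasColimitsOfSize.{v, v} M] [OrderBot P] [WellFoundedLT P] {D : P ⥤ M}

/-- Induction on the cardinality of `T`. A finite `T` has a hull with a greatest element; an
infinite `T` is the union of a chain of subsets of smaller cardinality, indexed by the initial
ordinal of the cardinality of `T`. -/
lemma homPreserves_hull (hu : Monotone u) {X : Set (Arrow M)} {A : M}
    (hA : SmallRel Cardinal.aleph0 X A) (hD : IsSmooth D)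
    (hl : ∀ (a b : P) (h : IsSuccOf a b), cellP X (D.map (homOfLE h.1.le))) (T : Set P) :
    HomPreserves D A (hull u T) := by
  induction hT : Cardinal.mk T using WellFoundedLT.induction generalizing T with
  | ind κ ih =>
  subst hT
  rcases lt_or_ge (Cardinal.mk T) Cardinal.aleph0 with hfin | hinf
  · lift T to Finset P using Cardinal.lt_aleph0_iff_set_finite.1 hfin
    exact homPreserves_of_isGreatest (isGreatest_hull hu T)
  · let β : Type v := (Cardinal.mk T).ord.ToType
    have hβ : Cardinal.mk β = Cardinal.mk T := Cardinal.mk_ord_toType _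
    have : NoMaxOrder β := Cardinal.noMaxOrder hinf
    have : Nonempty β := by
      rw [← Cardinal.mk_ne_zero_iff, hβ]
      exact (Cardinal.aleph0_pos.trans_le hinf).ne'
    let _ : OrderBot β := WellFoundedLT.toOrderBot _
    have hwf : WellFoundedLT β := inferInstance
    obtain ⟨eT⟩ := Cardinal.eq.1 hβ
    let e : β → P := fun b => (eT b : P)
    have hmem : ∀ b, e b ∈ T := fun b => (eT b).2
    have hsurj : ∀ x ∈ T, ∃ b, e b = x := fun x hx => ⟨eT.symm ⟨x, hx⟩, by simp [e]⟩
    have hcard : ∀ b : β, Cardinal.mk (e '' Set.Iio b) < Cardinal.mk T := fun b =>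
      Cardinal.mk_image_le.trans_lt
      ((Cardinal.mk_Iio_lt b (by rw [hβ, Ordinal.type_toType])).trans_eq hβ)
    clear_value e
    refine homPreserves_of_chain hA hD hl hwf
      (Monotone.functor (f := fun b : β => hull u (e '' Set.Iio b))
        fun a b h => hull_mono (Set.image_mono (Set.Iio_subset_Iio h)))
      (fun b => hull_isLowerSet _) (fun b => bot_mem_hull _) (fun b hb x hx => ?_)
      (fun b => hull_mono ?_) (fun x hx => ?_) (fun b => ih _ (hcard b) _ rfl)
    · refine exists_mem_hull (c := Set.Iio b) ⟨⊥, bot_lt_iff_ne_bot.2 hb.1⟩ ?_ hx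
      rintro _ ⟨i, hi, rfl⟩
      by_contra hno
      exact hb.2 ⟨i, hi, fun c hc => not_lt.1 fun h => hno ⟨c, hc, i, h, rfl⟩⟩
    · rintro _ ⟨i, -, rfl⟩
      exact hmem i
    · obtain ⟨b, -, hb⟩ := exists_mem_hull (c := Set.univ) Set.univ_nonempty (fun y hy => by
        obtain ⟨i, rfl⟩ := hsurj y hy
        obtain ⟨b, hb⟩ := exists_gt i
        exact ⟨b, trivial, i, hb, rfl⟩) hx
      exact ⟨b, hb⟩

end

/-- Smallness with respect to chains implies smallness with respect to good directed diagrams. -/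
lemma strictlySmallRel_of_smallRel [HasColimitsOfSize.{v, v} M] {X : Set (Arrow M)} {A : M}
    (hA : SmallRel Cardinal.aleph0 X A) : StrictlySmallRel Cardinal.aleph0 X A := by
  intro P _ _ hP hdir D hD hl c hc
  obtain ⟨u, hu, hub⟩ := exists_monotone_upperBound hdir
  have hmem : ∀ x, x ∈ hull u Set.univ := fun x =>
    ⟨{x}, Set.subset_univ _, hub _ _ (Finset.mem_singleton_self x)⟩
  obtain ⟨hE, hU⟩ := homPreserves_hull hu hA hD hl Set.univ
  obtain ⟨d, hd⟩ := exists_colimOn_desc D (S := hull u Set.univ) (fun x _ => c.ι.app x)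
    (fun x y _ _ h => c.w (homOfLE h))
  obtain ⟨d', hd'⟩ : ∃ d' : c.pt ⟶ colimOn D (hull u Set.univ),
      ∀ x, c.ι.app x ≫ d' = inOn D x (hmem x) := by
    let s : Cocone D :=
      { pt := colimOn D (hull u Set.univ)
        ι :=
          { app := fun x => inOn D x (hmem x)
            naturality := fun x y f => by
              change D.map f ≫ inOn D y _ = inOn D x _ ≫ 𝟙 _
              rw [Category.comp_id]
              exact map_inOn D _ _ (leOfHom f) } }
    exact ⟨hc.desc s, hc.fac s⟩
  have hdd : d' ≫ d = 𝟙 _ := hc.hom_ext fun x => by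
    rw [← Category.assoc, hd', hd, Category.comp_id]
  have : IsDirectedOrder P := by
    classical
    exact ⟨fun x y => ⟨u {x, y}, hub _ _ (by simp), hub _ _ (by simp)⟩⟩
  refine ⟨Types.FilteredColimit.isColimitOf' _ _ (fun f => ?_) (fun x g g' h => ?_)⟩
  · obtain ⟨x, hx, g, hg⟩ := hE (f ≫ d')
    refine ⟨x, g, ?_⟩
    change f = g ≫ c.ι.app x
    rw [← hd x hx, ← Category.assoc, hg, Category.assoc, hdd, Category.comp_id]
  · have h' : g ≫ c.ι.app x = g' ≫ c.ι.app x := h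
    obtain ⟨y, -, hxy, hy⟩ := hU x (hmem x) g g' (by
      rw [← hd', ← Category.assoc, h', Category.assoc])
    exact ⟨y, homOfLE hxy, hy⟩

/-- Let `M` be a cocomplete category and `(L, R)` a weak factorization
system on `M` which is cofibrantly generated by a set of morphisms `X ⊆ L` whose domains
are `ℵ₀`-small relative to `X`.  Then `(L, R)` is strictly `ℵ₀`-cofibrantly generated,
i.e. the domains of the morphisms in `X` are strictly `ℵ₀`-small relative to `X`. -/
theorem statement0 {M : Type u} [Category.{v} M] [HasColimitsOfSize.{v, v} M]
    (L R : MorphismProperty M) (_ : IsWFS L R)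
    (X : Set (Arrow M)) (hX : CofGenBy L R X Cardinal.aleph0) :
    StrictlyCofGenBy L R X Cardinal.aleph0 ∧
      ∀ a ∈ X, StrictlySmallRel Cardinal.aleph0 X a.left := by
  have h : ∀ a ∈ X, StrictlySmallRel Cardinal.aleph0 X a.left :=
    fun a ha => strictlySmallRel_of_smallRel (hX.2 a ha)
  exact ⟨⟨hX.1, h⟩, h⟩

end Paper
end

section
/- Let M be a cocomplete category and (L,R) a weak factorization system on M which is perfectly κ-cofibrantly generated with generating set X, and let λ ≥ κ be a regular cardinal. Then A(X,λ) is a small colimit-dense full subcategory of the category M_c of cofibrant objects consisting of objects that are λ-presentable in M; in particular, every cofibrant object is a presentable object of M. -/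
/-!
The only substantial claim is that a cofibrant object `A` is a colimit of objects of `A(X, λ)`.
Its presentability follows, a small colimit of `λ`-presentable objects being presentable.
Smallness of `A(X, λ)` and `λ`-presentability of its members hold because `Ã(X, λ)` is the closure
of a small set of `λ`-presentable objects under `λ`-small colimits.

The small object argument factors `0 → A` as a relative cell complex `0 → C` followed by a map
`π : C → A` in `R`, and `A` is a retract of `C` since it is cofibrant. The plain construction
attaches too many cells at once for `C` to be visibly built from `A(X, λ)`, so it is replaced by a
version spread over a `λ`-directed preorder of sub-complexes. Let `Q` be the set of well-founded
trees with fewer than `λ` children at each node and labels in a small set `E`, ordered by the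
subtree relation. This preorder is `λ`-directed and each tree has fewer than `λ` subtrees
(`CellTree`). Starting with initial objects, diagrams `T_α : Q → M/A` are constructed for `α < λ`;
passing from `T_α` to `T_(α+1)` attaches at `q` those cells `k : K → T_α(U)` for which the tree
with root labelled by a code of `k` and sole child `U` is a subtree of `q`. Codes are injective
(`exists_code`), so fewer than `λ` cells are attached at `q`, and all `T_α(q)` stay in `Ã(X, λ)`
(`fatIter_obj_mem`). They are cofibrant because `L` is stable under coproducts, cobase change and
transfinite composition (`fatIter_map_bot_mem`). Every attaching map is filled after increasing
`α` and `q` (`fatDiagram_solution`). Hence `C := colim T_α(q)` over the `λ`-filtered category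
`λ × Q` maps to `A` by a map in `R`, since the domains of `X` are `λ`-presentable.

Finally, `A` itself, and not merely a retract of it, is recovered as a colimit by enlarging the
diagram: if `σ` is a section of `π`, then `A` is the colimit of the full subcategory of `M/A` on
the objects `T_α(q)` (`isColimitOfDiagramIn_of_retract`). Each composite `T_α(q) → A → C` factors
through some `T_β(q')` by a morphism over `A`.
-/

universe w v u v₁ u₁ v₂ u₂

open CategoryTheory Limits Opposite

namespace Paper

variable {M : Type u} [Category.{v} M]

/-- `A` is a colimit (in `M`) of a (small) diagram with values in `S`. -/
def IsColimitOfDiagramIn {M : Type u} [Category.{v} M] (S : Set M) (A : M) : Prop :=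
  ∃ J : Cat.{v, v}, ∃ D : J ⥤ M, (∀ j, D.obj j ∈ S) ∧
    ∃ c : Cocone D, Nonempty (IsColimit c) ∧ c.pt = A

/-! ### Comparison with the notions of Mathlib -/

section Bridges

variable {M : Type u} [Category.{v} M]

lemma cardFiltered_iff (lam : Cardinal.{v}) [Fact lam.IsRegular] (J : Type u₁) [Category.{v₁} J] :
    CardFiltered lam J ↔ IsCardinalFiltered J lam :=
  ⟨fun h => ⟨fun F hA => h _ ((hasCardinalLT_iff_cardinal_mk_lt _ _).1 hA) F⟩,
    fun h _ _ hA F => h.nonempty_cocone F ((hasCardinalLT_iff_cardinal_mk_lt _ _).2 hA)⟩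

lemma isCardinalPresentable_iff_mathlib (lam : Cardinal.{v}) [Fact lam.IsRegular] (A : M) :
    IsCardinalPresentable lam A ↔ CategoryTheory.IsCardinalPresentable A lam := by
  refine ⟨fun h => ⟨fun J _ hJ => ⟨fun {D} => ⟨fun {c} hc =>
    h J ((cardFiltered_iff lam J).2 hJ) D c hc⟩⟩⟩, fun h J _ hJ D c hc => ?_⟩
  have := (cardFiltered_iff lam J).1 hJ
  have := preservesColimitsOfShape_of_isCardinalPresentable A lam J
  exact ⟨isColimitOfPreserves _ hc⟩

/-- The domains and codomains of the morphisms of `X`. -/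
def endpoints (X : Set (Arrow M)) : ObjectProperty M :=
  fun m => ∃ a ∈ X, m = a.left ∨ m = a.right

/-- `Atilde X lam` is Mathlib's closure of `endpoints X` under `lam`-small colimits. -/
lemma mem_atilde_iff (X : Set (Arrow M)) {lam : Cardinal.{v}} (hlam : lam.IsRegular) (m : M) :
    m ∈ Atilde X lam ↔ (endpoints X).colimitsCardinalClosure lam m := by
  constructor
  · intro h
    refine h {m | (endpoints X).colimitsCardinalClosure lam m} (fun a ha =>
      ⟨ObjectProperty.le_colimitsCardinalClosure _ _ _ ⟨a, ha, Or.inl rfl⟩,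
        ObjectProperty.le_colimitsCardinalClosure _ _ _ ⟨a, ha, Or.inr rfl⟩⟩) ?_
    intro J _ hJ D c hc hD
    have := (endpoints X).isClosedUnderColimitsOfShape_colimitsCardinalClosure lam J
      ((hasCardinalLT_iff_cardinal_mk_lt _ _).2 hJ)
    exact ObjectProperty.prop_of_isColimit (P := (endpoints X).colimitsCardinalClosure lam) hc hD
  · intro h S hS hS'
    let Q : ObjectProperty M := fun m => m ∈ S
    have hQ (J : Type v) [SmallCategory J] (hJ : HasCardinalLT (Arrow J) lam) :
        Q.IsClosedUnderColimitsOfShape J :=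
      ⟨fun _ ⟨h⟩ => hS' J ((hasCardinalLT_iff_cardinal_mk_lt _ _).1 hJ) _ _ h.isColimit
        h.prop_diag_obj⟩
    -- `S` is closed under isomorphisms, these being colimits of one-object diagrams.
    have : Q.IsClosedUnderIsomorphisms := ⟨fun {A B} e hA => by
      have := hQ (Discrete PUnit.{v + 1}) (hasCardinalLT_of_finite _ _ hlam.aleph0_le)
      let c : Cocone (Discrete.functor fun _ : PUnit.{v + 1} => A) :=
        { pt := B, ι := Discrete.natTrans fun _ => e.hom }
      have hc : IsColimit c :=
        { desc := fun s => e.inv ≫ s.ι.app ⟨⟨⟩⟩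
          fac := fun s j => by
            change e.hom ≫ _ = _
            rw [Iso.hom_inv_id_assoc]
          uniq := fun s m hm => by
            rw [← hm ⟨⟨⟩⟩]
            exact (Iso.inv_hom_id_assoc e m).symm }
      exact Q.prop_of_isColimit hc fun _ => hA⟩
    refine ObjectProperty.colimitsCardinalClosure_le _ lam hQ ?_ m h
    rintro _ ⟨a, ha, rfl | rfl⟩
    exacts [(hS a ha).1, (hS a ha).2]

lemma essentiallySmall_closure (X : Set (Arrow M)) [Small.{v} X] (lam : Cardinal.{v}) :
    ObjectProperty.EssentiallySmall.{v} ((endpoints X).colimitsCardinalClosure lam) := by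
  have h : endpoints X =
      (fun m => m ∈ Set.range (Sum.elim (fun a : X => a.1.left) (fun a : X => a.1.right))) := by
    ext m
    constructor
    · rintro ⟨a, ha, rfl | rfl⟩
      exacts [⟨Sum.inl ⟨a, ha⟩, rfl⟩, ⟨Sum.inr ⟨a, ha⟩, rfl⟩]
    · rintro ⟨a | a, rfl⟩
      exacts [⟨a.1, a.2, Or.inl rfl⟩, ⟨a.1, a.2, Or.inr rfl⟩]
  have : ObjectProperty.Small.{v} (endpoints X) := by
    rw [h]
    exact small_range (Sum.elim (fun a : X => a.1.left) (fun a : X => a.1.right))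
  infer_instance

lemma closure_le_isCardinalPresentable (X : Set (Arrow M)) (lam : Cardinal.{v})
    [Fact lam.IsRegular] (h : endpoints X ≤ isCardinalPresentable M lam) :
    (endpoints X).colimitsCardinalClosure lam ≤ isCardinalPresentable M lam :=
  ObjectProperty.colimitsCardinalClosure_le _ lam
    (fun J _ hJ =>
      { colimitsOfShape_le := by
          rintro Y ⟨hY⟩
          have (j : J) : CategoryTheory.IsCardinalPresentable (hY.diag.obj j) lam :=
            hY.prop_diag_obj j
          exact isCardinalPresentable_of_isColimit _ hY.isColimit lam hJ }) h

/-- A small colimit of `λ`-presentable objects is `μ`-presentable as soon as `μ` bounds `λ` and the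
size of the diagram. -/
lemma isPresentableObj_of_isColimit (lam : Cardinal.{v}) [Fact lam.IsRegular] {J : Type v}
    [SmallCategory J] {D : J ⥤ M} (hD : ∀ j, CategoryTheory.IsCardinalPresentable (D.obj j) lam)
    (c : Cocone D) (hc : IsColimit c) : IsPresentableObj c.pt := by
  obtain ⟨μ, hμ, h⟩ := HasCardinalLT.exists_regular_cardinal.{v} (Arrow J ⊕ lam.out)
  have : Fact μ.IsRegular := ⟨hμ⟩
  have hle : lam ≤ μ := by
    have := h.of_injective _ (Sum.inr_injective (α := Arrow J))
    rw [hasCardinalLT_iff_cardinal_mk_lt, Cardinal.mk_out] at this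
    exact this.le
  have (j : J) : CategoryTheory.IsCardinalPresentable (D.obj j) μ :=
    have := hD j
    isCardinalPresentable_of_le _ hle
  exact ⟨μ, hμ, (isCardinalPresentable_iff_mathlib μ _).2
    (isCardinalPresentable_of_isColimit c hc μ (h.of_injective _ Sum.inl_injective))⟩

end Bridges

/-! ### Trees with few subtrees -/

/-- Well-founded trees whose nodes are labelled in `E` and have fewer than `lam` children. The
children are indexed by a subset of a fixed set of cardinality `lam`, which keeps the type of all
trees in `Type v`. -/
inductive CellTree (lam : Cardinal.{v}) (E : Type v) : Type v
  | node (s : Set lam.out) (hs : Cardinal.mk s < lam) (f : s → CellTree lam E) (e : E) :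
      CellTree lam E

namespace CellTree

variable {lam : Cardinal.{v}} {E : Type v}

/-- The subtree relation. -/
inductive Le : CellTree lam E → CellTree lam E → Prop
  | refl (t : CellTree lam E) : Le t t
  | child {t : CellTree lam E} {s : Set lam.out} {hs : Cardinal.mk s < lam}
      {f : s → CellTree lam E} {e : E} (b : s) (h : Le t (f b)) : Le t (node s hs f e)

lemma Le.trans' {a b c : CellTree lam E} (h₁ : Le a b) (h₂ : Le b c) : Le a c := by
  induction h₂ with
  | refl => exact h₁
  | child b _ ih => exact Le.child b ih

instance : Preorder (CellTree lam E) where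
  le := Le
  le_refl := Le.refl
  le_trans _ _ _ := Le.trans'

lemma le_node {s : Set lam.out} {hs : Cardinal.mk s < lam} {f : s → CellTree lam E} {e : E}
    (b : s) : f b ≤ node s hs f e :=
  Le.child b (Le.refl _)

/-- Regularity of `lam` bounds the number of subtrees of a tree. -/
lemma mk_Iic_lt (hlam : lam.IsRegular) (t : CellTree lam E) :
    HasCardinalLT (Set.Iic t) lam := by
  induction t with
  | node s hs f e ih =>
    have hsub : Set.Iic (node s hs f e) ⊆
        (⋃ b : s, Set.Iic (f b)) ∪ {node s hs f e} := by
      rintro x hx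
      cases hx with
      | refl => exact Or.inr rfl
      | child b h => exact Or.inl (Set.mem_iUnion.2 ⟨b, h⟩)
    have : Fact lam.IsRegular := ⟨hlam⟩
    have h1 : HasCardinalLT (⋃ b : s, Set.Iic (f b) : Set _) lam :=
      hasCardinalLT_iUnion _ ((hasCardinalLT_iff_cardinal_mk_lt _ _).2 hs) ih
    have h2 : HasCardinalLT ({node s hs f e} : Set (CellTree lam E)) lam :=
      hasCardinalLT_of_finite _ _ hlam.aleph0_le
    exact (hasCardinalLT_union hlam.aleph0_le h1 h2).of_injective _
      (Set.inclusion_injective hsub)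

/-- Fewer than `lam` trees are bounded above by the tree having all of them as children. -/
lemma exists_upper_bound [Nonempty E] (K : Type v) (s : K → CellTree lam E)
    (hK : HasCardinalLT K lam) : ∃ t, ∀ k, s k ≤ t := by
  rw [hasCardinalLT_iff_cardinal_mk_lt] at hK
  obtain ⟨g⟩ : Nonempty (K ↪ lam.out) := by
    rw [← Cardinal.le_def, Cardinal.mk_out]
    exact hK.le
  have hr : Cardinal.mk (Set.range g) < lam := by
    rwa [Cardinal.mk_range_eq _ g.injective]
  refine ⟨node (Set.range g) hr (fun b => s b.2.choose) (Classical.arbitrary E), fun k => ?_⟩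
  have := le_node (hs := hr) (f := fun b : Set.range g => s b.2.choose) (e := Classical.arbitrary E)
    ⟨g k, k, rfl⟩
  have h2 : (⟨g k, k, rfl⟩ : Set.range g).2.choose = k :=
    g.injective (⟨g k, k, rfl⟩ : Set.range g).2.choose_spec
  dsimp only at this
  rwa [h2] at this

lemma isCardinalFiltered [Fact lam.IsRegular] [Nonempty E] :
    IsCardinalFiltered (CellTree lam E) lam :=
  isCardinalFiltered_preorder _ _ fun K s hK =>
    exists_upper_bound K s ((hasCardinalLT_iff_cardinal_mk_lt _ _).2 hK)

/-- The tree with root labelled `e` and `U` as its only child. It determines both `U` and `e`. -/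
noncomputable def extend (hlam : lam.IsRegular) (U : CellTree lam E) (e : E) : CellTree lam E :=
  have : Nonempty lam.out := Cardinal.mk_ne_zero_iff.1 (by
    rw [Cardinal.mk_out]; exact hlam.ne_zero)
  node {Classical.arbitrary lam.out} (by
    rw [Cardinal.mk_singleton]; exact Cardinal.one_lt_aleph0.trans_le hlam.aleph0_le)
    (fun _ => U) e

lemma le_extend (hlam : lam.IsRegular) (U : CellTree lam E) (e : E) : U ≤ extend hlam U e :=
  le_node (f := fun _ => U) ⟨_, rfl⟩

lemma extend_inj (hlam : lam.IsRegular) {U U' : CellTree lam E} {e e' : E}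
    (h : extend hlam U e = extend hlam U' e') : U = U' ∧ e = e' := by
  simp only [extend] at h
  injection h with _ h1 h2
  exact ⟨congrFun h1 ⟨_, rfl⟩, h2⟩

end CellTree

/-! ### A small object argument indexed by trees -/

section FatSmallObject

variable {N : Type u} [Category.{v} N] {lam : Cardinal.{v}} {E : Type v} {ι : Type v}
  (hlam : lam.IsRegular) {K Lo : ι → N} (f : ∀ i, K i ⟶ Lo i)
  (code : ∀ s : N, (Σ i, K i ⟶ s) → E)

/-- The cells attached at the index `q`: attaching maps `k : K i ⟶ T.obj U` such that the tree
`CellTree.extend hlam U (code _ ⟨i, k⟩)`, which records the cell, is a subtree of `q`. -/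
abbrev CellsAt (T : CellTree lam E ⥤ N) (q : CellTree lam E) : Type v :=
  { c : Σ U : CellTree lam E, Σ i, K i ⟶ T.obj U // CellTree.extend hlam c.1 (code _ c.2) ≤ q }

variable {hlam code} in
/-- A cell attached at `q` is also attached at every `q' ≥ q`. -/
abbrev CellsAt.incl {T : CellTree lam E ⥤ N} {q q' : CellTree lam E} (h : q ≤ q')
    (c : CellsAt hlam code T q) : CellsAt hlam code T q' :=
  ⟨c.1, c.2.trans h⟩

/-- The cells at `q` inject into the subtrees of `q`, so there are fewer than `lam` of them. -/
lemma hasCardinalLT_cellsAt (T : CellTree lam E ⥤ N)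
    (hT : ∀ q, Function.Injective (code (T.obj q))) (q : CellTree lam E) :
    HasCardinalLT (CellsAt hlam code T q) lam := by
  refine (CellTree.mk_Iic_lt hlam q).of_injective
    (fun c => ⟨CellTree.extend hlam c.1.1 (code _ c.1.2), c.2⟩) ?_
  rintro ⟨⟨U, w⟩, h⟩ ⟨⟨U', w'⟩, h'⟩ e
  obtain ⟨rfl, e2⟩ := CellTree.extend_inj hlam (congrArg Subtype.val e)
  obtain rfl := hT _ e2
  rfl

variable [HasColimitsOfSize.{v, v} N]

/-- The functor sending `q` to the coproduct of the objects `Y i` over the cells at `q`. -/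
noncomputable def cellCoprod (T : CellTree lam E ⥤ N) (Y : ι → N) : CellTree lam E ⥤ N where
  obj q := ∐ fun c : CellsAt hlam code T q => Y c.1.2.1
  map {q q'} g := Sigma.desc fun c =>
    Sigma.ι (fun c : CellsAt hlam code T q' => Y c.1.2.1) (c.incl (leOfHom g))
  map_id q := Sigma.hom_ext _ _ fun c => by
    rw [Sigma.ι_desc, Category.comp_id]
  map_comp g g' := Sigma.hom_ext _ _ fun c => by
    rw [Sigma.ι_desc, Sigma.ι_desc_assoc, Sigma.ι_desc]

/-- The coprojection of `cellCoprod` at a cell. -/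
noncomputable def cellι (T : CellTree lam E ⥤ N) (Y : ι → N) (q : CellTree lam E)
    (c : CellsAt hlam code T q) : Y c.1.2.1 ⟶ (cellCoprod hlam code T Y).obj q :=
  Sigma.ι (fun c : CellsAt hlam code T q => Y c.1.2.1) c

lemma cellCoprod_hom_ext {T : CellTree lam E ⥤ N} {Y : ι → N} {q : CellTree lam E} {Z : N}
    {g g' : (cellCoprod hlam code T Y).obj q ⟶ Z}
    (h : ∀ c, cellι hlam code T Y q c ≫ g = cellι hlam code T Y q c ≫ g') : g = g' :=
  Sigma.hom_ext _ _ h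

lemma cellι_map (T : CellTree lam E ⥤ N) (Y : ι → N) {q q' : CellTree lam E} (g : q ⟶ q')
    (c : CellsAt hlam code T q) : cellι hlam code T Y q c ≫ (cellCoprod hlam code T Y).map g =
      cellι hlam code T Y q' (c.incl (leOfHom g)) :=
  Sigma.ι_desc _ _

lemma cellι_map_assoc (T : CellTree lam E ⥤ N) (Y : ι → N) {q q' : CellTree lam E} (g : q ⟶ q')
    (c : CellsAt hlam code T q) {Z : N} (h : (cellCoprod hlam code T Y).obj q' ⟶ Z) :
    cellι hlam code T Y q c ≫ (cellCoprod hlam code T Y).map g ≫ h =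
      cellι hlam code T Y q' (c.incl (leOfHom g)) ≫ h := by
  rw [← Category.assoc, cellι_map]

/-- The attaching map of all the cells at `q`. -/
noncomputable def cellAttachApp (T : CellTree lam E ⥤ N) (q : CellTree lam E) :
    (cellCoprod hlam code T K).obj q ⟶ T.obj q :=
  Sigma.desc fun c => c.1.2.2 ≫ T.map (homOfLE ((CellTree.le_extend hlam _ _).trans c.2))

lemma cellι_cellAttachApp (T : CellTree lam E ⥤ N) (q : CellTree lam E)
    (c : CellsAt hlam code T q) : cellι hlam code T K q c ≫ cellAttachApp hlam code T q =
      c.1.2.2 ≫ T.map (homOfLE ((CellTree.le_extend hlam _ _).trans c.2)) :=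
  Sigma.ι_desc _ _

lemma cellι_cellAttachApp_assoc (T : CellTree lam E ⥤ N) (q : CellTree lam E)
    (c : CellsAt hlam code T q) {Z : N} (h : T.obj q ⟶ Z) :
    cellι hlam code T K q c ≫ cellAttachApp hlam code T q ≫ h =
      c.1.2.2 ≫ T.map (homOfLE ((CellTree.le_extend hlam _ _).trans c.2)) ≫ h := by
  rw [← Category.assoc, cellι_cellAttachApp, Category.assoc]

/-- The coproduct of the maps `f i` over the cells at `q`. -/
noncomputable def cellMapApp (T : CellTree lam E ⥤ N) (q : CellTree lam E) :
    (cellCoprod hlam code T K).obj q ⟶ (cellCoprod hlam code T Lo).obj q :=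
  Limits.Sigma.map fun c => f c.1.2.1

lemma cellι_cellMapApp (T : CellTree lam E ⥤ N) (q : CellTree lam E)
    (c : CellsAt hlam code T q) : cellι hlam code T K q c ≫ cellMapApp hlam f code T q =
      f c.1.2.1 ≫ cellι hlam code T Lo q c :=
  Sigma.ι_map _ _

lemma cellι_cellMapApp_assoc (T : CellTree lam E ⥤ N) (q : CellTree lam E)
    (c : CellsAt hlam code T q) {Z : N} (h : (cellCoprod hlam code T Lo).obj q ⟶ Z) :
    cellι hlam code T K q c ≫ cellMapApp hlam f code T q ≫ h =
      f c.1.2.1 ≫ cellι hlam code T Lo q c ≫ h := by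
  rw [← Category.assoc, cellι_cellMapApp, Category.assoc]

/-- `cellAttachApp` as a natural transformation. -/
@[simps]
noncomputable def cellAttach (T : CellTree lam E ⥤ N) : cellCoprod hlam code T K ⟶ T where
  app q := cellAttachApp hlam code T q
  naturality q q' g := cellCoprod_hom_ext hlam code fun c => by
    simp only [cellι_map_assoc, cellι_cellAttachApp, cellι_cellAttachApp_assoc,
      ← Functor.map_comp]
    rfl

/-- `cellMapApp` as a natural transformation. -/
@[simps]
noncomputable def cellMap (T : CellTree lam E ⥤ N) :
    cellCoprod hlam code T K ⟶ cellCoprod hlam code T Lo where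
  app q := cellMapApp hlam f code T q
  naturality q q' g := cellCoprod_hom_ext hlam code fun c => by
    simp only [cellι_map_assoc, cellι_cellMapApp, cellι_cellMapApp_assoc, cellι_map]

/-- One step of the construction: attach, at each index `q`, all the cells at `q`. The iteration
starts at the initial functor. -/
noncomputable def fatStep : SmallObject.SuccStruct (CellTree lam E ⥤ N) where
  X₀ := ⊥_ _
  succ T := pushout (cellAttach hlam code T) (cellMap hlam f code T)
  toSucc _ := pushout.inl _ _

/-- The inclusion of the attached cells. -/
noncomputable def fatStepInr (T : CellTree lam E ⥤ N) :
    cellCoprod hlam code T Lo ⟶ (fatStep hlam f code).succ T :=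
  pushout.inr _ _

lemma fatStep_isPushout (T : CellTree lam E ⥤ N) (q : CellTree lam E) :
    IsPushout (cellMapApp hlam f code T q) (cellAttachApp hlam code T q)
      ((fatStepInr hlam f code T).app q) (((fatStep hlam f code).toSucc T).app q) :=
  (IsPushout.of_hasPushout (cellAttach hlam code T) (cellMap hlam f code T)).flip.map
    ((evaluation _ _).obj q)

/-- After one step, an attaching map `k : K i ⟶ T.obj q` extends along `f i`, at the cost of
enlarging `q` to the tree that records this cell. -/
lemma fatStep_solution (T : CellTree lam E ⥤ N) (q : CellTree lam E) (i : ι) (k : K i ⟶ T.obj q) :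
    ∃ l : Lo i ⟶ ((fatStep hlam f code).succ T).obj (CellTree.extend hlam q (code _ ⟨i, k⟩)),
      f i ≫ l = k ≫ T.map (homOfLE (CellTree.le_extend hlam _ _)) ≫
        ((fatStep hlam f code).toSucc T).app _ := by
  let c : CellsAt hlam code T (CellTree.extend hlam q (code _ ⟨i, k⟩)) := ⟨⟨q, ⟨i, k⟩⟩, le_rfl⟩
  refine ⟨cellι hlam code T Lo _ c ≫ (fatStepInr hlam f code T).app _, ?_⟩
  have h := (fatStep_isPushout hlam f code T (CellTree.extend hlam q (code _ ⟨i, k⟩))).w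
  have h2 := cellι hlam code T K _ c ≫= h
  rw [cellι_cellMapApp_assoc, cellι_cellAttachApp_assoc] at h2
  exact h2

/-- If `W` contains the maps `G.map (f i)` and is closed under coproducts and cobase change, then
`G` sends the components of a step of the construction to `W`. -/
lemma fatStep_prop_le {M : Type u₁} [Category.{v₁} M] (G : N ⥤ M) [PreservesColimitsOfSize.{v, v} G]
    (W : MorphismProperty M) [W.IsStableUnderCobaseChange]
    [MorphismProperty.IsStableUnderCoproducts.{v} W]
    (hW : ∀ i, W (G.map (f i))) (q : CellTree lam E) :
    (fatStep hlam f code).prop ≤ W.inverseImage ((evaluation _ _).obj q ⋙ G) := by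
  intro T _ _ h
  cases h
  have : PreservesFiniteColimits G := PreservesColimitsOfSize.preservesFiniteColimits G
  have h := (fatStep_isPushout hlam f code T q).map G
  refine MorphismProperty.of_isPushout (P := W) h.flip ?_
  refine MorphismProperty.colimitsOfShape_le (W := W) (J := Discrete (CellsAt hlam code T q)) _
    (MorphismProperty.colimitsOfShape.mk' _ _ _ _
      (isColimitOfPreserves G (coproductIsCoproduct fun c : CellsAt hlam code T q => K c.1.2.1))
      (isColimitOfPreserves G (coproductIsCoproduct fun c : CellsAt hlam code T q => Lo c.1.2.1))
      (Functor.whiskerRight (Discrete.natTrans fun c => f c.as.1.2.1) G) ?_ _ ?_)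
  · exact fun c => hW _
  · intro c
    refine (G.map_comp _ _).symm.trans ((congrArg G.map
      (cellι_cellMapApp hlam f code T q c.as)).trans (G.map_comp _ _))

/-- A step of the construction stays inside a class `P` closed under `lam`-small colimits, as it
attaches fewer than `lam` cells at each index. -/
lemma fatStep_obj_mem (P : ObjectProperty N)
    (hP : ∀ (J : Type v) [SmallCategory J], HasCardinalLT (Arrow J) lam →
      P.IsClosedUnderColimitsOfShape J) [P.IsClosedUnderColimitsOfShape WalkingSpan]
    (hK : ∀ i, P (K i)) (hLo : ∀ i, P (Lo i)) (hcode : ∀ s, P s → Function.Injective (code s))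
    (T : CellTree lam E ⥤ N) (hT : ∀ q, P (T.obj q)) (q : CellTree lam E) :
    P (((fatStep hlam f code).succ T).obj q) := by
  have := hP (Discrete (CellsAt hlam code T q)) ((hasCardinalLT_arrow_discrete_iff _).2
    (hasCardinalLT_cellsAt hlam code T (fun q => hcode _ (hT q)) q))
  refine P.prop_of_isColimit (fatStep_isPushout hlam f code T q).isColimit ?_
  have h1 : P ((cellCoprod hlam code T K).obj q) := P.prop_colimit _ fun c => hK _
  have h2 : P ((cellCoprod hlam code T Lo).obj q) := P.prop_colimit _ fun c => hLo _
  rintro (_ | _ | _)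
  exacts [h1, h2, hT q]

section Iteration

variable [OrderBot lam.ord.ToType]

/-- The iteration of `fatStep` along the ordinals smaller than `lam.ord`. -/
noncomputable abbrev fatIter : lam.ord.ToType ⥤ CellTree lam E ⥤ N :=
  (fatStep hlam f code).iterationFunctor lam.ord.ToType

/-- The iteration starts with initial objects. -/
noncomputable def isInitialFatIterBot (q : CellTree lam E) :
    IsInitial (((fatIter hlam f code).obj ⊥).obj q) :=
  (IsInitial.isInitialObj ((evaluation _ _).obj q) _ initialIsInitial).ofIso
    (((fatStep hlam f code).iterationFunctorObjBotIso lam.ord.ToType).symm.app q)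

/-- All the stages of the iteration take values in `P`: the limit stages are indexed by ordinals
smaller than `lam.ord`, so the colimits taken there are `lam`-small. -/
lemma fatIter_obj_mem (P : ObjectProperty N)
    (hP : ∀ (J : Type v) [SmallCategory J], HasCardinalLT (Arrow J) lam →
      P.IsClosedUnderColimitsOfShape J) [P.IsClosedUnderColimitsOfShape WalkingSpan]
    (hK : ∀ i, P (K i)) (hLo : ∀ i, P (Lo i)) (hcode : ∀ s, P s → Function.Injective (code s))
    (α : lam.ord.ToType) : ∀ (q : CellTree lam E), P (((fatIter hlam f code).obj α).obj q) := by
  induction α using SuccOrder.limitRecOn with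
  | isMin α hα =>
    intro q
    obtain rfl := hα.eq_bot
    have := hP (Discrete PEmpty.{v + 1}) (hasCardinalLT_of_finite _ _ hlam.aleph0_le)
    let F : Discrete PEmpty.{v + 1} ⥤ N := Functor.empty _
    let c : Cocone F :=
      { pt := ((fatIter hlam f code).obj ⊥).obj q, ι := (Functor.emptyExt _ _).hom }
    exact P.prop_of_isColimit ((isColimitEquivIsInitialOfIsEmpty _ c).symm
      (isInitialFatIterBot hlam f code q)) (fun j => j.as.elim)
  | succ α hα ih =>
    intro q
    have h := ((fatStep hlam f code).prop_iterationFunctor_map_succ α hα).succ_eq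
    change P ((((fatStep hlam f code).iterationFunctor lam.ord.ToType).obj _).obj q)
    rw [← h]
    exact fatStep_obj_mem hlam f code P hP hK hLo hcode _ ih q
  | isSuccLimit α hα ih =>
    intro q
    have hc := (fatIter hlam f code).isColimitOfIsWellOrderContinuous α hα
    have := hP (Set.Iio α) (by
      have h : HasCardinalLT (Set.Iio α) lam := by
        rw [hasCardinalLT_iff_cardinal_mk_lt]
        simpa using Cardinal.mk_Iio_lt α
      refine (hasCardinalLT_prod hlam.aleph0_le h h).of_injective
        (fun a => (a.left, a.right)) ?_
      rintro ⟨a, b, g⟩ ⟨a', b', g'⟩ e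
      obtain ⟨rfl, rfl⟩ := Prod.ext_iff.1 e
      obtain rfl : g = g' := Subsingleton.elim _ _
      rfl)
    exact P.prop_of_isColimit (isColimitOfPreserves ((evaluation _ _).obj q) hc)
      fun j => ih j.1 j.2 q

/-- The map from the initial stage to any stage is a transfinite composition of steps, hence its
components are sent to `W` by `G`. -/
lemma fatIter_map_bot_mem {M : Type u₁} [Category.{v₁} M] (G : N ⥤ M)
    [PreservesColimitsOfSize.{v, v} G]
    (W : MorphismProperty M) [W.IsStableUnderCobaseChange]
    [MorphismProperty.IsStableUnderCoproducts.{v} W]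
    [MorphismProperty.IsStableUnderTransfiniteComposition.{v} W]
    (hW : ∀ i, W (G.map (f i))) (α : lam.ord.ToType) (q : CellTree lam E) :
    W (G.map (((fatIter hlam f code).map (homOfLE (bot_le : ⊥ ≤ α))).app q)) :=
  have : PreservesWellOrderContinuousOfShape lam.ord.ToType ((evaluation _ _).obj q ⋙ G) :=
    { preservesColimitsOfShape := fun _ _ => inferInstance }
  ((((fatStep hlam f code).transfiniteCompositionOfShapeιIteration lam.ord.ToType).ofLE
    (fatStep_prop_le hlam f code G W hW q)).map).mem_map (homOfLE (bot_le : ⊥ ≤ α))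

/-- The iteration as a single diagram indexed by the stage and the tree. Its index category is
`lam`-filtered, and both indices grow when a lifting problem is solved. -/
noncomputable abbrev fatDiagram : lam.ord.ToType × CellTree lam E ⥤ N :=
  Functor.uncurry.obj (fatIter hlam f code)

/-- Every attaching map `K i ⟶ fatDiagram j` extends along `f i` after enlarging the index `j`. -/
lemma fatDiagram_solution (j : lam.ord.ToType × CellTree lam E) (i : ι)
    (k : K i ⟶ (fatDiagram hlam f code).obj j) :
    ∃ (j' : lam.ord.ToType × CellTree lam E) (g : j ⟶ j')
      (l : Lo i ⟶ (fatDiagram hlam f code).obj j'),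
      f i ≫ l = k ≫ (fatDiagram hlam f code).map g := by
  obtain ⟨α, q⟩ := j
  have := Cardinal.noMaxOrder hlam.aleph0_le
  have h := (fatStep hlam f code).prop_iterationFunctor_map_succ α (not_isMax α)
  obtain ⟨l, hl⟩ := fatStep_solution hlam f code ((fatIter hlam f code).obj α) q i k
  refine ⟨(Order.succ α, CellTree.extend hlam q (code _ ⟨i, k⟩)),
    Prod.mkHom (homOfLE (Order.le_succ α)) (homOfLE (CellTree.le_extend hlam _ _)),
    l ≫ (eqToHom h.succ_eq).app _, ?_⟩
  rw [reassoc_of% hl, ← NatTrans.comp_app, ← h.fac]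
  simp

end Iteration

end FatSmallObject

/-! ### Colimits from retracts of filtered colimits -/

/-- Let `C` be the colimit of a `λ`-filtered diagram of `λ`-presentable objects `D j` over `A`. If
the comparison `π : C ⟶ A` has a section `σ`, then `A` is the colimit of the full subcategory of
`Over A` on the objects `D j`: every `D j ⟶ A ⟶ C` factors through some `D j'`, and since
`σ ≫ π = 𝟙` the factorization `D j ⟶ D j'` is a morphism over `A`. -/
lemma isColimitOfDiagramIn_of_retract {M : Type u} [Category.{v} M] (S : Set M)
    {lam : Cardinal.{v}} [Fact lam.IsRegular] {A : M} {J : Type v} [SmallCategory J]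
    [IsCardinalFiltered J lam] (D : J ⥤ Over A) (hS : ∀ j, (D.obj j).left ∈ S)
    (hD : ∀ j, CategoryTheory.IsCardinalPresentable (D.obj j).left lam)
    (c : Cocone (D ⋙ Over.forget A)) (hc : IsColimit c) (π : c.pt ⟶ A) (σ : A ⟶ c.pt)
    (hπ : ∀ j, c.ι.app j ≫ π = (D.obj j).hom) (hσ : σ ≫ π = 𝟙 A) :
    IsColimitOfDiagramIn S A := by
  let I : InducedCategory (Over A) D.obj ⥤ Over A := inducedFunctor _
  let lift : J ⥤ InducedCategory (Over A) D.obj :=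
    { obj := fun j => j
      map := fun g => InducedCategory.homMk (D.map g)
      map_id := fun j => by ext : 1; exact D.map_id j
      map_comp := fun g h => by ext : 1; exact D.map_comp g h }
  let a : Cocone (I ⋙ Over.forget A) := (Over.forgetCocone A).whisker I
  let res (s : Cocone (I ⋙ Over.forget A)) : Cocone (D ⋙ Over.forget A) :=
    { pt := s.pt
      ι := { app := fun j => s.ι.app j
             naturality := fun i j g => s.ι.naturality (lift.map g) } }
  have ha : IsColimit a :=
    { desc := fun s => σ ≫ hc.desc (res s)
      fac := fun s j => by
        have := hD j
        obtain ⟨j', g, hg⟩ := CategoryTheory.IsCardinalPresentable.exists_hom_of_isColimit lam hc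
          ((D.obj j).hom ≫ σ)
        have hg' : g ≫ (D.obj j').hom = (D.obj j).hom := by
          rw [← hπ, reassoc_of% hg, hσ, Category.comp_id]
        let G : lift.obj j ⟶ lift.obj j' :=
          InducedCategory.homMk (Over.homMk (U := D.obj j) (V := D.obj j') g hg')
        change (D.obj j).hom ≫ σ ≫ hc.desc (res s) = s.ι.app j
        rw [← Category.assoc, ← hg, Category.assoc, hc.fac]
        exact s.w G
      uniq := fun s (m : A ⟶ s.pt) hm => by
        have h : π ≫ m = hc.desc (res s) := hc.uniq (res s) (π ≫ m) fun j =>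
          (Category.assoc _ _ _).symm.trans ((congrArg (fun k => k ≫ m) (hπ j)).trans (hm j))
        exact (Category.id_comp m).symm.trans ((congrArg (fun k => k ≫ m) hσ.symm).trans
          ((Category.assoc _ _ _).trans (congrArg (fun k => σ ≫ k) h))) }
  exact ⟨Cat.of (InducedCategory (Over A) D.obj), I ⋙ Over.forget A, hS, a, ⟨ha⟩, rfl⟩

/-! ### Cofibrant objects as colimits -/

section Assembly

variable {M : Type u} [Category.{v} M]

/-- When `P` is essentially small, the maps from a small family of objects into an object `s` over
`A` with `P s.left` can be encoded injectively in a single small set, uniformly in `s`: transport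
the map to a chosen representative of the isomorphism class of `s.left`. -/
lemma exists_code (P : ObjectProperty M) [ObjectProperty.EssentiallySmall.{v} P] {A : M}
    {ι : Type v} (K : ι → Over A) :
    ∃ (E : Type v) (_ : Nonempty E) (code : ∀ s : Over A, (Σ i, K i ⟶ s) → E),
      ∀ s, P s.left → Function.Injective (code s) := by
  classical
  obtain ⟨Q, hQ, -, hPQ⟩ := ObjectProperty.EssentiallySmall.exists_small_le.{v} P
  have : Small.{v} (Subtype Q) := hQ
  let rep (t : Shrink.{v} (Subtype Q)) : M := ((equivShrink _).symm t).1
  have h (s : Over A) (hs : P s.left) : ∃ t, Nonempty (s.left ≅ rep t) := by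
    obtain ⟨t, ht, ⟨e⟩⟩ := hPQ _ hs
    exact ⟨equivShrink _ ⟨t, ht⟩, ⟨e ≪≫ eqToIso (by simp [rep])⟩⟩
  choose t e using h
  refine ⟨Option (Σ (t : Shrink.{v} (Subtype Q)) (i : ι), (K i).left ⟶ rep t), inferInstance,
    fun s p => if hs : P s.left then some ⟨t s hs, p.1, p.2.left ≫ (e s hs).some.hom⟩ else none,
    fun s hs => ?_⟩
  rintro ⟨i, g⟩ ⟨i', g'⟩ h
  simp only [hs, dite_true, Option.some.injEq, Sigma.mk.injEq, heq_eq_eq, true_and] at h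
  obtain ⟨rfl, h⟩ := h
  have h' : g.left = g'.left := (cancel_mono _).1 (eq_of_heq h)
  obtain rfl : g = g' := Over.OverMorphism.ext h'
  rfl

variable [HasColimitsOfSize.{v, v} M]

/-- Over every object `A` there is a `lam`-filtered diagram of cofibrant objects in the closure of
`endpoints X` under `lam`-small colimits such that any lifting problem of some `a ∈ X` against
`D j ⟶ A` is solved at a later index `j'`. It is `fatDiagram` in `Over A`, for the family of all
morphisms `a.left ⟶ a.right` over `A` with `a ∈ X`. -/
lemma exists_fat_resolution {lam : Cardinal.{v}} [Fact lam.IsRegular]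
    (X : Set (Arrow M)) [Small.{v} X] (W : MorphismProperty M) [W.IsStableUnderCobaseChange]
    [MorphismProperty.IsStableUnderCoproducts.{v} W]
    [MorphismProperty.IsStableUnderTransfiniteComposition.{v} W] (hW : ∀ a ∈ X, W a.hom) (A : M) :
    ∃ (J : Type v) (_ : SmallCategory J) (_ : IsCardinalFiltered J lam) (D : J ⥤ Over A),
      (∀ j, (endpoints X).colimitsCardinalClosure lam (D.obj j).left) ∧
      (∀ j, CofibrantObj W (D.obj j).left) ∧
      ∀ a ∈ X, ∀ (j : J) (k : a.left ⟶ (D.obj j).left) (l : a.right ⟶ A),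
        k ≫ (D.obj j).hom = a.hom ≫ l →
        ∃ (j' : J) (g : j ⟶ j') (k' : a.right ⟶ (D.obj j').left),
          a.hom ≫ k' = k ≫ (D.map g).left ∧ k' ≫ (D.obj j').hom = l := by
  have hlam : lam.IsRegular := Fact.out
  let P := (endpoints X).colimitsCardinalClosure lam
  have : ObjectProperty.EssentiallySmall.{v} P := essentiallySmall_closure X lam
  let ι : Type v := Σ x : Shrink.{v} X, ((equivShrink X).symm x).1.right ⟶ A
  let x (i : ι) : Arrow M := ((equivShrink X).symm i.1).1
  have hx (i : ι) : x i ∈ X := ((equivShrink X).symm i.1).2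
  let K (i : ι) : Over A := Over.mk ((x i).hom ≫ i.2)
  let Lo (i : ι) : Over A := Over.mk (Y := (x i).right) i.2
  let f (i : ι) : K i ⟶ Lo i := Over.homMk (x i).hom
  obtain ⟨E, _, code, hcode⟩ := exists_code P K
  have : Nonempty lam.ord.ToType := by
    rw [← Cardinal.mk_ne_zero_iff, Cardinal.mk_ord_toType]
    exact hlam.ne_zero
  let _ : OrderBot lam.ord.ToType := WellFoundedLT.toOrderBot _
  have hP (J : Type v) [SmallCategory J] (hJ : HasCardinalLT (Arrow J) lam) :
      (P.inverseImage (Over.forget A)).IsClosedUnderColimitsOfShape J :=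
    have := (endpoints X).isClosedUnderColimitsOfShape_colimitsCardinalClosure lam J hJ
    inferInstance
  have : (P.inverseImage (Over.forget A)).IsClosedUnderColimitsOfShape WalkingSpan :=
    have := (endpoints X).isClosedUnderColimitsOfShape_colimitsCardinalClosure lam WalkingSpan
      (hasCardinalLT_of_finite _ _ hlam.aleph0_le)
    inferInstance
  have : IsCardinalFiltered (CellTree lam E) lam := CellTree.isCardinalFiltered
  refine ⟨lam.ord.ToType × CellTree lam E, inferInstance, inferInstance, fatDiagram hlam f code,
    fun j => ?_, fun j I hI => ?_, fun a ha j k l h => ?_⟩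
  · exact fatIter_obj_mem hlam f code (P.inverseImage (Over.forget A)) hP
      (fun i => ObjectProperty.le_colimitsCardinalClosure _ _ _ ⟨x i, hx i, Or.inl rfl⟩)
      (fun i => ObjectProperty.le_colimitsCardinalClosure _ _ _ ⟨x i, hx i, Or.inr rfl⟩)
      hcode j.1 j.2
  · have h := fatIter_map_bot_mem hlam f code (Over.forget A) W (fun i => hW _ (hx i)) j.1 j.2
    have h0 : IsInitial ((Over.forget A).obj (((fatIter hlam f code).obj ⊥).obj j.2)) :=
      IsInitial.isInitialObj _ _ (isInitialFatIterBot hlam f code j.2)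
    rw [hI.hom_ext (hI.to _) ((hI.uniqueUpToIso h0).hom ≫ _)]
    exact (W.cancel_left_of_respectsIso _ _).2 h
  · obtain ⟨y, rfl⟩ : ∃ y, ((equivShrink X).symm y).1 = a :=
      ⟨equivShrink X ⟨a, ha⟩, by simp⟩
    obtain ⟨j', g, l', hl'⟩ := fatDiagram_solution hlam f code j ⟨y, l⟩ (Over.homMk k h)
    exact ⟨j', g, l'.left, congrArg (fun m => CommaMorphism.left m) hl', Over.w l'⟩

end Assembly

/-- The colimit `C` of the diagram of `exists_fat_resolution` maps to `A` by a morphism `π` with the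
right lifting property against `X`, the domains of `X` being `lam`-presentable. As `A` is
cofibrant, `π` has a section. -/
lemma isColimitOfDiagramIn_of_cofibrant {M : Type u} [Category.{v} M] [HasColimitsOfSize.{v, v} M]
    {lam : Cardinal.{v}} [Fact lam.IsRegular] (X : Set (Arrow M)) [Small.{v} X]
    (hX : endpoints X ≤ isCardinalPresentable M lam) (hL : ∀ a ∈ X, (rlpSet X).llp a.hom)
    (A : M) (hA : CofibrantObj (rlpSet X).llp A) :
    IsColimitOfDiagramIn (Aset (rlpSet X).llp X lam) A := by
  obtain ⟨J, _, _, D, hD, hcof, hsol⟩ :=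
    exists_fat_resolution (lam := lam) X (rlpSet X).llp hL A
  let c := colimit.cocone (D ⋙ Over.forget A)
  have hc : IsColimit c := colimit.isColimit _
  let π : c.pt ⟶ A := hc.desc ((Over.forgetCocone A).whisker D)
  have hπ (j : J) : c.ι.app j ≫ π = (D.obj j).hom := hc.fac _ j
  let leg (j : J) : (D.obj j).left ⟶ c.pt := c.ι.app j
  have hleg {j j' : J} (g : j ⟶ j') : (D.map g).left ≫ leg j' = leg j := c.w g
  have hlegπ (j : J) : leg j ≫ π = (D.obj j).hom := hπ j
  have hrlp : rlpSet X π := fun a ha => ⟨fun {k l} sq => by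
    have := hX _ ⟨a, ha, Or.inl rfl⟩
    rw [isCardinalPresentable_iff] at this
    obtain ⟨j, (k₀ : a.left ⟶ (D.obj j).left), (hk : k₀ ≫ leg j = k)⟩ :=
      CategoryTheory.IsCardinalPresentable.exists_hom_of_isColimit lam hc k
    have hk' : k₀ ≫ (D.obj j).hom = a.hom ≫ l := by
      rw [← hlegπ, reassoc_of% hk, sq.w]
    obtain ⟨j', g, k', h₁, h₂⟩ := hsol a ha j k₀ l hk'
    exact ⟨⟨{
      l := k' ≫ leg j'
      fac_left := by
        rw [reassoc_of% h₁, hleg, hk]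
      fac_right := by rw [Category.assoc, hlegπ, h₂] }⟩⟩⟩
  have := hA initialIsInitial π hrlp
  have sq : CommSq (initialIsInitial.to c.pt) (initialIsInitial.to A) π (𝟙 A) :=
    ⟨initialIsInitial.hom_ext _ _⟩
  exact isColimitOfDiagramIn_of_retract _ D
    (fun j => ⟨(mem_atilde_iff X Fact.out _).2 (hD j), hcof j⟩)
    (fun j => closure_le_isCardinalPresentable X lam hX _ (hD j)) c hc π sq.lift hπ sq.fac_right

/-- Let `M` be a cocomplete category and `(L, R)` a weak factorization
system on `M` which is perfectly `κ`-cofibrantly generated with generating set `X`, and let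
`λ ≥ κ` be a regular cardinal.  Then `A(X, λ)` is a small colimit-dense full subcategory of
the category of cofibrant objects consisting of objects that are `λ`-presentable in `M`;
in particular every cofibrant object is a presentable object of `M`. -/
theorem statement5 {M : Type u} [Category.{v} M] [HasColimitsOfSize.{v, v} M]
    (L R : MorphismProperty M) (_ : IsWFS L R)
    (κ : Cardinal.{v}) (_ : κ.IsRegular)
    (X : Set (Arrow M)) (hX : PerfectlyCofGenBy L R X κ)
    (lam : Cardinal.{v}) (hlam : lam.IsRegular) (hκlam : κ ≤ lam) :
    EssentiallySmallSet (Aset L X lam) ∧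
    (∀ m ∈ Aset L X lam, CofibrantObj L m) ∧
    (∀ m ∈ Aset L X lam, IsCardinalPresentable lam m) ∧
    (∀ A : M, CofibrantObj L A → IsColimitOfDiagramIn (Aset L X lam) A) ∧
    (∀ A : M, CofibrantObj L A → IsPresentableObj A) := by
  rename_i hWFS hκ
  have : Fact lam.IsRegular := ⟨hlam⟩
  have : Fact κ.IsRegular := ⟨hκ⟩
  obtain ⟨⟨⟨hsmall, hXL, rfl⟩, hleft⟩, hright⟩ := hX
  obtain rfl : (rlpSet X).llp = L := hWFS.llp_eq
  have hpres : endpoints X ≤ isCardinalPresentable M lam := by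
    rintro _ ⟨a, ha, rfl | rfl⟩
    · have := (isCardinalPresentable_iff_mathlib κ _).1 (hleft a ha)
      exact isCardinalPresentable_of_le _ hκlam
    · have := (isCardinalPresentable_iff_mathlib κ _).1 (hright a ha)
      exact isCardinalPresentable_of_le _ hκlam
  have h3 : ∀ m ∈ Aset (rlpSet X).llp X lam, CategoryTheory.IsCardinalPresentable m lam :=
    fun m hm => closure_le_isCardinalPresentable X lam hpres m ((mem_atilde_iff X hlam m).1 hm.1)
  have h4 : ∀ A : M, CofibrantObj (rlpSet X).llp A →
      IsColimitOfDiagramIn (Aset (rlpSet X).llp X lam) A :=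
    isColimitOfDiagramIn_of_cofibrant X hpres hXL
  refine ⟨?_, fun m hm => hm.2, fun m hm => (isCardinalPresentable_iff_mathlib lam m).2 (h3 m hm),
    h4, fun A hA => ?_⟩
  · let P : ObjectProperty M := fun m => m ∈ Aset (rlpSet X).llp X lam
    have := essentiallySmall_closure X lam
    have : ObjectProperty.EssentiallySmall.{v} P := ObjectProperty.EssentiallySmall.of_le
      (Q := (endpoints X).colimitsCardinalClosure lam)
      fun m hm => (mem_atilde_iff X hlam m).1 hm.1
    obtain ⟨Q, hQ, hQP, hPQ⟩ := ObjectProperty.EssentiallySmall.exists_small_le.{v} P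
    exact ⟨{m | Q m}, hQ, hQP, fun m hm => by
      obtain ⟨t, ht, e⟩ := hPQ m hm
      exact ⟨t, ht, e⟩⟩
  · obtain ⟨J, D, hD, c, ⟨hc⟩, rfl⟩ := h4 A hA
    exact isPresentableObj_of_isColimit lam (fun j => h3 _ (hD j)) c hc

end Paper
end
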